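/- arXiv:2203.00711 — 5 statements merged into one kernel-verified Lean document; each statement's English description precedes it below -/
import Mathlib

section
/- Assume α ≥ 1, λ is nondecreasing on [t₀,∞), b(t) > β'(t) + β(t)/t (equivalently w(t) > 0) for every t ≥ t₀, and (α−3)·w(t) − t·w'(t) ≥ 0 for every t ≥ t₀. Then for every z ∈ argmin Φ, the energy function E(t) = t²·w(t)·(Φ_{λ(t)}(x(t)) − Φ*) + (1/2)·‖(α−1)·(x(t)−z) + t·ẋ(t) + t·β(t)·∇Φ_{λ(t)}(x(t))‖² is nonincreasing on [t₀,∞). -/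
open Set MeasureTheory Filter Real

noncomputable section

/-- Convexity for extended-real-valued functions. -/
def EConvexOn {H : Type*} [NormedAddCommGroup H] [NormedSpace ℝ H] (f : H → EReal) : Prop :=
  ∀ x y : H, ∀ a c : ℝ, 0 ≤ a → 0 ≤ c → a + c = 1 →
    f (a • x + c • y) ≤ (a : EReal) * f x + (c : EReal) * f y

/-- `p` is the proximal point of `f` with parameter `l` at `x`, i.e. the (unique) minimizer of
`y ↦ f y + ‖x - y‖² / (2l)`. -/
def IsProxPt {H : Type*} [NormedAddCommGroup H] [InnerProductSpace ℝ H]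
    (f : H → EReal) (l : ℝ) (x p : H) : Prop :=
  ∀ y : H, f p + ((‖x - p‖ ^ 2 / (2 * l) : ℝ) : EReal)
      ≤ f y + ((‖x - y‖ ^ 2 / (2 * l) : ℝ) : EReal)

/-- The Moreau envelope of `f` with parameter `l` (as a real number). -/
def moreau {H : Type*} [NormedAddCommGroup H] [InnerProductSpace ℝ H]
    (f : H → EReal) (l : ℝ) (x : H) : ℝ :=
  (⨅ y : H, f y + ((‖x - y‖ ^ 2 / (2 * l) : ℝ) : EReal)).toReal

open Topology in
lemma squeeze_deriv {m l u : ℝ → ℝ} {s : Set ℝ} {t d : ℝ} (_ht : t ∈ s)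
    (hl : HasDerivWithinAt l d s t) (hu : HasDerivWithinAt u d s t)
    (hlt : l t = 0) (hut : u t = 0)
    (h1 : ∀ y ∈ s, l y ≤ m y - m t) (h2 : ∀ y ∈ s, m y - m t ≤ u y) :
    HasDerivWithinAt m d s t := by
  rw [hasDerivWithinAt_iff_isLittleO] at *
  rw [Asymptotics.isLittleO_iff] at *
  intro c hc
  filter_upwards [hl hc, hu hc, self_mem_nhdsWithin] with y a1 a2 hy
  have b1 := h1 y hy
  have b2 := h2 y hy
  simp only [Real.norm_eq_abs, smul_eq_mul] at *
  rw [abs_le] at *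
  constructor <;> linarith [a1.1, a1.2, a2.1, a2.2]

lemma prox_finite {H : Type*} [NormedAddCommGroup H] [InnerProductSpace ℝ H]
    {f : H → EReal} {l : ℝ} {x p : H} (hpr : ∃ y, f y ≠ ⊤)
    (hp : IsProxPt f l x p) : f p ≠ ⊤ := by
  obtain ⟨y, hy⟩ := hpr
  intro h
  have := hp y
  rw [h, EReal.top_add_coe, top_le_iff] at this
  exact EReal.add_ne_top hy (EReal.coe_ne_top _) this

lemma moreau_eq {H : Type*} [NormedAddCommGroup H] [InnerProductSpace ℝ H]
    {f : H → EReal} {l : ℝ} {x p : H} {r : ℝ} (hr : f p = r)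
    (hp : IsProxPt f l x p) : moreau f l x = r + ‖x - p‖ ^ 2 / (2 * l) := by
  have : (⨅ y : H, f y + ((‖x - y‖ ^ 2 / (2 * l) : ℝ) : EReal))
      = ((r + ‖x - p‖ ^ 2 / (2 * l) : ℝ) : EReal) := by
    apply le_antisymm
    · refine (iInf_le _ p).trans ?_
      rw [hr]; exact (EReal.coe_add _ _).ge
    · refine le_iInf fun y => ?_
      have := hp y
      rw [hr, ← EReal.coe_add] at this
      exact this
  rw [moreau, this, EReal.toReal_coe]

lemma prox_ineq {H : Type*} [NormedAddCommGroup H] [InnerProductSpace ℝ H]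
    {f : H → EReal} {l : ℝ} (hl : 0 < l) {x p z : H} {r q : ℝ} (hr : f p = r) (hq : f z = q)
    (hf : EConvexOn f)
    (hp : IsProxPt f l x p) :
    r + ‖x - p‖ ^ 2 / (2 * l) - q ≤ inner ℝ (l⁻¹ • (x - p)) (x - z) := by
  have key : ∀ e : ℝ, 0 < e → e ≤ 1 →
      r - q ≤ l⁻¹ * inner ℝ (x - p) (p - z) + e * (‖p - z‖ ^ 2 / (2 * l)) := by
    intro e he he1
    have h1 := hp ((1 - e) • p + e • z)
    have h2 := hf p z (1 - e) e (by linarith) he.le (by ring)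
    rw [hr, hq] at h2
    have h3 := h1.trans (add_le_add_left h2 _)
    rw [hr] at h3
    have h4 : r + ‖x - p‖ ^ 2 / (2 * l) ≤ (1 - e) * r + e * q
        + ‖x - ((1 - e) • p + e • z)‖ ^ 2 / (2 * l) := by exact_mod_cast h3
    have h5 : x - ((1 - e) • p + e • z) = (x - p) + e • (p - z) := by module
    rw [h5, norm_add_sq_real, inner_smul_right, norm_smul, mul_pow, Real.norm_eq_abs, sq_abs] at h4
    have h6 : e * (r - q) ≤ e * (l⁻¹ * inner ℝ (x - p) (p - z) + e * (‖p - z‖ ^ 2 / (2 * l))) := by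
      have : (‖x - p‖ ^ 2 + 2 * (e * inner ℝ (x - p) (p - z)) + e ^ 2 * ‖p - z‖ ^ 2) / (2 * l)
        = ‖x - p‖ ^ 2 / (2 * l) + e * (l⁻¹ * inner ℝ (x - p) (p - z) + e * (‖p - z‖ ^ 2 / (2 * l))) := by
        field_simp
        ring
      linarith
    exact le_of_mul_le_mul_left h6 he
  have lim : r - q ≤ l⁻¹ * inner ℝ (x - p) (p - z) := by
    apply le_of_forall_pos_le_add
    intro d hd
    set C := ‖p - z‖ ^ 2 / (2 * l) with hC
    have hC0 : 0 ≤ C := by positivity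
    have := key (min 1 (d / (C + 1))) (by positivity) (min_le_left _ _)
    have h7 : min 1 (d / (C + 1)) * C ≤ d := by
      calc _ ≤ d / (C + 1) * C := by gcongr; exact min_le_right _ _
        _ ≤ d / (C + 1) * (C + 1) := by gcongr; linarith
        _ = d := by field_simp
    linarith
  have h8 : x - z = (x - p) + (p - z) := by abel
  rw [h8, real_inner_smul_left, inner_add_right, real_inner_self_eq_norm_sq]
  have : ‖x - p‖ ^ 2 / (2 * l) ≤ l⁻¹ * ‖x - p‖ ^ 2 := by
    rw [div_eq_inv_mul, mul_inv]
    have : 0 ≤ l⁻¹ * ‖x - p‖ ^ 2 := by positivity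
    linarith
  linarith

lemma moreau_deriv {H : Type*} [NormedAddCommGroup H] [InnerProductSpace ℝ H]
    {f : H → EReal} {s : Set ℝ} {lam : ℝ → ℝ} {x p : ℝ → H} {φ : ℝ → ℝ} {t l' : ℝ} {v p' : H}
    (ht : t ∈ s)
    (hl : ∀ y ∈ s, 0 < lam y) (hφ : ∀ y ∈ s, f (p y) = φ y)
    (hp : ∀ y ∈ s, IsProxPt f (lam y) (x y) (p y))
    (hl' : HasDerivWithinAt lam l' s t) (hx : HasDerivWithinAt x v s t)
    (hp' : HasDerivWithinAt p p' s t) :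
    HasDerivWithinAt (fun y => moreau f (lam y) (x y))
      (inner ℝ ((lam t)⁻¹ • (x t - p t)) v - l' / 2 * ‖(lam t)⁻¹ • (x t - p t)‖ ^ 2) s t := by
  have hlt := hl t ht
  have hm : ∀ y ∈ s, moreau f (lam y) (x y) = φ y + ‖x y - p y‖ ^ 2 / (2 * lam y) :=
    fun y hy => moreau_eq (hφ y hy) (hp y hy)
  have hi : ∀ y ∈ s, ∀ y' ∈ s, φ y + ‖x y - p y‖ ^ 2 / (2 * lam y)
      ≤ φ y' + ‖x y - p y'‖ ^ 2 / (2 * lam y) := by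
    intro y hy y' hy'
    have := hp y hy (p y')
    rw [hφ y hy, hφ y' hy'] at this
    exact_mod_cast this
  have d2 : HasDerivWithinAt (fun y => 2 * lam y) (2 * l') s t := hl'.const_mul 2
  have hne : 2 * lam t ≠ 0 := by positivity
  apply squeeze_deriv (l := fun y => ‖x y - p y‖ ^ 2 / (2 * lam y) - ‖x t - p y‖ ^ 2 / (2 * lam t))
    (u := fun y => ‖x y - p t‖ ^ 2 / (2 * lam y) - ‖x t - p t‖ ^ 2 / (2 * lam t)) ht
  · refine (((hx.sub hp').norm_sq.div d2 hne).sub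
      ((hp'.const_sub (x t)).norm_sq.div_const (2 * lam t))).congr_deriv ?_
    simp only [Pi.sub_apply, norm_smul, real_inner_smul_left, inner_sub_right, inner_neg_right, mul_pow, norm_inv, inv_pow, Real.norm_eq_abs, sq_abs]
    field_simp
    ring
  · refine (((hx.sub_const (p t)).norm_sq.div d2 hne).sub_const _).congr_deriv ?_
    simp only [norm_smul, real_inner_smul_left, mul_pow, norm_inv, inv_pow, Real.norm_eq_abs, sq_abs]
    field_simp
  · simp
  · simp
  · intro y hy
    rw [hm y hy, hm t ht]
    linarith [hi t ht y hy]
  · intro y hy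
    rw [hm y hy, hm t ht]
    linarith [hi y hy t ht]

theorem moreau_energy_antitone
    {H : Type*} [NormedAddCommGroup H] [InnerProductSpace ℝ H] [CompleteSpace H]
    (Φ : H → EReal)
    (hΦbot : ∀ y, Φ y ≠ ⊥) (hΦproper : ∃ y, Φ y ≠ ⊤)
    (hΦconv : EConvexOn Φ) (hΦlsc : LowerSemicontinuous Φ)
    (t₀ α : ℝ) (ht₀ : 0 < t₀)
    (β b lam β' b' lam' w' : ℝ → ℝ)
    (hβnonneg : ∀ t ≥ t₀, 0 ≤ β t)
    (hbpos : ∀ t ≥ t₀, 0 < b t)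
    (hlampos : ∀ t ≥ t₀, 0 < lam t)
    (hβ' : ∀ t ≥ t₀, HasDerivAt β (β' t) t)
    (hb' : ∀ t ≥ t₀, HasDerivAt b (b' t) t)
    (hlam' : ∀ t ≥ t₀, HasDerivAt lam (lam' t) t)
    (hw' : ∀ t ≥ t₀, HasDerivAt (fun s => b s - β' s - β s / s) (w' t) t)
    (x v acc p G' : ℝ → H)
    (hx : ∀ t ≥ t₀, HasDerivAt x (v t) t)
    (hv : ∀ t ≥ t₀, HasDerivAt v (acc t) t)
    (hp : ∀ t ≥ t₀, IsProxPt Φ (lam t) (x t) (p t))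
    (hG' : ∀ t ≥ t₀, HasDerivAt (fun s => (lam s)⁻¹ • (x s - p s)) (G' t) t)
    (hode : ∀ t ≥ t₀, acc t + (α / t) • v t + β t • G' t
        + b t • ((lam t)⁻¹ • (x t - p t)) = 0)
    (hα : 1 ≤ α)
    (hlammono : MonotoneOn lam (Set.Ici t₀))
    (hw : ∀ t ≥ t₀, β' t + β t / t < b t)
    (hAs1 : ∀ t ≥ t₀, 0 ≤ (α - 3) * (b t - β' t - β t / t) - t * w' t)
    (z : H) (hz : ∀ y, Φ z ≤ Φ y)
    :
    AntitoneOn (fun t =>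
      t ^ 2 * (b t - β' t - β t / t) * (moreau Φ (lam t) (x t) - (Φ z).toReal)
        + (1 / 2) * ‖(α - 1) • (x t - z) + t • v t
            + (t * β t) • ((lam t)⁻¹ • (x t - p t))‖ ^ 2)
      (Set.Ici t₀) := by
  have hfin : ∀ y, Φ y ≠ ⊤ → Φ y = (((Φ y).toReal : ℝ) : EReal) := fun y hy =>
    (EReal.coe_toReal hy (hΦbot y)).symm
  have hztop : Φ z ≠ ⊤ := by
    obtain ⟨y, hy⟩ := hΦproper
    exact ne_top_of_le_ne_top hy (hz y)
  have hφ : ∀ t ∈ Set.Ici t₀, Φ (p t) = (((Φ (p t)).toReal : ℝ) : EReal) := fun t ht =>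
    hfin _ (prox_finite hΦproper (hp t ht))
  have hder : ∀ t ∈ Set.Ici t₀, ∃ D : ℝ, D ≤ 0 ∧ HasDerivWithinAt (fun t =>
      t ^ 2 * (b t - β' t - β t / t) * (moreau Φ (lam t) (x t) - (Φ z).toReal)
        + (1 / 2) * ‖(α - 1) • (x t - z) + t • v t
            + (t * β t) • ((lam t)⁻¹ • (x t - p t))‖ ^ 2) D (Set.Ici t₀) t := by
    intro t ht
    have htpos : 0 < t := lt_of_lt_of_le ht₀ ht
    have hlt := hlampos t ht
    have hpd : HasDerivWithinAt p (v t - (lam t • G' t + lam' t • ((lam t)⁻¹ • (x t - p t))))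
        (Set.Ici t₀) t := by
      refine ((hx t ht).hasDerivWithinAt.sub
        ((hlam' t ht).hasDerivWithinAt.smul (hG' t ht).hasDerivWithinAt)).congr_of_mem ?_ ht
      intro y hy
      have := (hlampos y hy).ne'
      simp [smul_smul, this]
    have hmd := moreau_deriv (f := Φ) ht hlampos hφ hp (hlam' t ht).hasDerivWithinAt
      (hx t ht).hasDerivWithinAt hpd
    have hl0 : 0 ≤ lam' t := by
      have h := hlammono.derivWithin_nonneg (x := t)
      rwa [(hlam' t ht).hasDerivWithinAt.derivWithin (uniqueDiffOn_Ici t₀ t ht)] at h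
    have hA : moreau Φ (lam t) (x t)
        = (Φ (p t)).toReal + ‖x t - p t‖ ^ 2 / (2 * lam t) := moreau_eq (hφ t ht) (hp t ht)
    have hB := prox_ineq hlt (hφ t ht) (hfin z hztop) hΦconv (hp t ht)
    have hpz : (Φ z).toReal ≤ (Φ (p t)).toReal :=
      EReal.toReal_le_toReal (hz _) (hΦbot z) (prox_finite hΦproper (hp t ht))
    have hA0 : 0 ≤ moreau Φ (lam t) (x t) - (Φ z).toReal := by
      have : 0 ≤ ‖x t - p t‖ ^ 2 / (2 * lam t) := by positivity
      linarith
    rw [← hA] at hB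
    have hode' := hode t ht
    have hgd := (hG' t ht).hasDerivWithinAt (s := Set.Ici t₀)
    have hwt : 0 < b t - β' t - β t / t := by linarith [hw t ht]
    have hY : HasDerivWithinAt (fun t => (α - 1) • (x t - z) + t • v t
            + (t * β t) • ((lam t)⁻¹ • (x t - p t)))
        (-((t * (b t - β' t - β t / t)) • ((lam t)⁻¹ • (x t - p t)))) (Set.Ici t₀) t := by
      have hid := hasDerivWithinAt_id t (Set.Ici t₀)
      refine ((((hx t ht).hasDerivWithinAt.sub_const z).const_smul (α - 1)).add
        (hid.smul (hv t ht).hasDerivWithinAt) |>.add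
        ((hid.mul (hβ' t ht).hasDerivWithinAt).smul hgd)).congr_deriv ?_
      have hacc : acc t = -((α / t) • v t + β t • G' t
        + b t • ((lam t)⁻¹ • (x t - p t))) := by
        rw [eq_neg_iff_add_eq_zero, ← hode']; abel
      simp only [hacc, id, Pi.mul_apply]
      generalize (lam t)⁻¹ • (x t - p t) = g
      match_scalars <;> field_simp <;> ring
    have hsq : HasDerivWithinAt (fun s : ℝ => s ^ 2) (2 * t) (Set.Ici t₀) t := by
      simpa using (hasDerivAt_pow 2 t).hasDerivWithinAt
    have hE := ((hsq.mul (hw' t ht).hasDerivWithinAt).mul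
      (hmd.sub_const (Φ z).toReal)).add (hY.norm_sq.const_mul (1 / 2 : ℝ))
    refine ⟨_, ?_, hE⟩
    have hb0 := hβnonneg t ht
    have has := hAs1 t ht
    simp only [Pi.mul_apply]
    generalize (lam t)⁻¹ • (x t - p t) = g at *
    generalize b t - β' t - β t / t = W at *
    generalize moreau Φ (lam t) (x t) - (Φ z).toReal = A at *
    rw [inner_neg_right, real_inner_smul_right, inner_add_left, inner_add_left,
      real_inner_smul_left, real_inner_smul_left, real_inner_smul_left,
      real_inner_self_eq_norm_sq, real_inner_comm g (x t - z), real_inner_comm g (v t)]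
    generalize (inner ℝ g (x t - z) : ℝ) = B at *
    generalize (inner ℝ g (v t) : ℝ) = C at *
    have e1 : 0 ≤ t * (((α - 3) * W - t * w' t) * A) := by positivity
    have e2 : 0 ≤ t * W * (α - 1) * (B - A) :=
      mul_nonneg (mul_nonneg (by positivity) (by linarith)) (by linarith)
    have e3 : 0 ≤ t ^ 2 * W * (lam' t / 2 * ‖g‖ ^ 2) := by positivity
    have e4 : 0 ≤ t ^ 2 * β t * W * ‖g‖ ^ 2 := by positivity
    linarith
  choose! D hD0 hD using hder
  refine antitoneOn_of_hasDerivWithinAt_nonpos (convex_Ici t₀)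
    (fun t ht => (hD t ht).continuousWithinAt)
    (fun t ht => (hD t (interior_subset ht)).mono interior_subset)
    (fun t ht => hD0 t (interior_subset ht))
end
end

section
/- Assume α ≥ 1, λ is nondecreasing on [t₀,∞), b(t) > β'(t) + β(t)/t (equivalently w(t) > 0) for every t ≥ t₀, and (α−3)·w(t) − t·w'(t) ≥ 0 for every t ≥ t₀. Then for every z ∈ argmin Φ and every t ≥ t₀, Φ_{λ(t)}(x(t)) − Φ* ≤ E(t₀)/(t²·w(t)), where E(t₀) = t₀²·w(t₀)·(Φ_{λ(t₀)}(x(t₀)) − Φ*) + (1/2)·‖(α−1)·(x(t₀)−z) + t₀·ẋ(t₀) + t₀·β(t₀)·∇Φ_{λ(t₀)}(x(t₀))‖². -/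
open Set MeasureTheory Filter Real

noncomputable section

lemma sandwich_deriv {S : Set ℝ} {L φ U : ℝ → ℝ} {t d : ℝ}
    (hL : HasDerivWithinAt L d S t) (hU : HasDerivWithinAt U d S t)
    (h1 : ∀ s ∈ S, L s ≤ φ s) (h2 : ∀ s ∈ S, φ s ≤ U s)
    (e1 : L t = φ t) (e2 : U t = φ t) : HasDerivWithinAt φ d S t := by
  rw [hasDerivWithinAt_iff_isLittleO] at *
  rw [Asymptotics.isLittleO_iff] at *
  intro c hc
  filter_upwards [hL hc, hU hc, self_mem_nhdsWithin] with s hs1 hs2 hs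
  have a1 := h1 s hs
  have a2 := h2 s hs
  rw [Real.norm_eq_abs] at hs1 hs2 ⊢
  rw [abs_le] at hs1 hs2 ⊢
  constructor <;> linarith

lemma env_deriv {H : Type*} [NormedAddCommGroup H] [InnerProductSpace ℝ H]
    (t₀ : ℝ) (f lam lam' : ℝ → ℝ) (x v p p' : ℝ → H)
    (hlampos : ∀ t ≥ t₀, 0 < lam t)
    (hlam' : ∀ t ≥ t₀, HasDerivAt lam (lam' t) t)
    (hx : ∀ t ≥ t₀, HasDerivAt x (v t) t)
    (hp' : ∀ t ≥ t₀, HasDerivAt p (p' t) t)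
    (hprox : ∀ s ≥ t₀, ∀ u ≥ t₀,
      f s + ‖x s - p s‖ ^ 2 / (2 * lam s) ≤ f u + ‖x s - p u‖ ^ 2 / (2 * lam s))
    (t : ℝ) (ht : t₀ ≤ t) :
    HasDerivWithinAt (fun s => f s + ‖x s - p s‖ ^ 2 / (2 * lam s))
      (inner ℝ (x t - p t) (v t) / lam t - lam' t * ‖x t - p t‖ ^ 2 / (2 * lam t ^ 2))
      (Set.Ici t₀) t := by
  have hl := hlampos t ht
  have hl0 : lam t ≠ 0 := hl.ne'
  have d2 : HasDerivAt (fun s => 2 * lam s) (2 * lam' t) t := (hlam' t ht).const_mul 2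
  apply sandwich_deriv
    (L := fun s => f t + ‖x t - p t‖ ^ 2 / (2 * lam t)
      + (‖x s - p s‖ ^ 2 / (2 * lam s) - ‖x t - p s‖ ^ 2 / (2 * lam t)))
    (U := fun s => f t + ‖x s - p t‖ ^ 2 / (2 * lam s))
  · have h1 := (((hx t ht).sub (hp' t ht)).norm_sq).div d2 (by positivity)
    have h2 := (((hasDerivAt_const t (x t)).sub (hp' t ht)).norm_sq).div_const (2 * lam t)
    have h3 := (h1.sub h2).const_add (f t + ‖x t - p t‖ ^ 2 / (2 * lam t))
    refine (h3.congr_deriv ?_).hasDerivWithinAt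
    simp only [Pi.sub_apply, inner_sub_right, zero_sub, inner_neg_right]
    field_simp
    ring
  · have h1 := (((hx t ht).sub (hasDerivAt_const t (p t))).norm_sq).div d2 (by positivity)
    refine ((h1.const_add (f t)).congr_deriv ?_).hasDerivWithinAt
    simp only [Pi.sub_apply, sub_zero]
    field_simp
    try ring
  · intro s hs
    have := hprox t ht s hs
    linarith
  · intro s hs
    exact hprox s hs t ht
  · simp
  · rfl

lemma prox_grad {H : Type*} [NormedAddCommGroup H] [InnerProductSpace ℝ H]
    (Φ : H → EReal) (hΦconv : EConvexOn Φ) (l : ℝ) (hl : 0 < l) (x p z : H) (fp fz : ℝ)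
    (hfp : Φ p = fp) (hfz : Φ z = fz) (hp : IsProxPt Φ l x p) :
    fp - fz ≤ inner ℝ (x - p) (p - z) / l := by
  have key : ∀ a : ℝ, 0 < a → a < 1 →
      fp - fz - inner ℝ (x - p) (p - z) / l ≤ a * (‖z - p‖ ^ 2 / (2 * l)) := by
    intro a ha ha1
    have h1 := hΦconv p z (1 - a) a (by linarith) ha.le (by ring)
    have h2 := hp ((1 - a) • p + a • z)
    have h3 := h2.trans (add_le_add_left h1 _)
    rw [hfp, hfz] at h3
    have h4 : fp + ‖x - p‖ ^ 2 / (2 * l)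
        ≤ (1 - a) * fp + a * fz + ‖x - ((1 - a) • p + a • z)‖ ^ 2 / (2 * l) := by
      exact_mod_cast h3
    have e : x - ((1 - a) • p + a • z) = (x - p) + a • (p - z) := by module
    rw [e, norm_add_sq_real, inner_smul_right, norm_smul, mul_pow, norm_sub_rev p z,
      Real.norm_eq_abs, sq_abs] at h4
    have h5 : (‖x - p‖ ^ 2 + 2 * (a * inner ℝ (x - p) (p - z)) + a ^ 2 * ‖z - p‖ ^ 2) / (2 * l)
       = ‖x - p‖ ^ 2 / (2 * l) + a * (inner ℝ (x - p) (p - z) / l)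
         + a * (a * (‖z - p‖ ^ 2 / (2 * l))) := by
      field_simp
    rw [h5] at h4
    have h6 : a * (fp - fz - inner ℝ (x - p) (p - z) / l)
        ≤ a * (a * (‖z - p‖ ^ 2 / (2 * l))) := by linarith
    exact le_of_mul_le_mul_left h6 ha
  have hlim : Tendsto (fun a : ℝ => a * (‖z - p‖ ^ 2 / (2 * l))) (nhdsWithin 0 (Set.Ioi 0))
      (nhds 0) := by
    have : Continuous (fun a : ℝ => a * (‖z - p‖ ^ 2 / (2 * l))) := by fun_prop
    have h := this.tendsto 0
    rw [zero_mul] at h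
    exact h.mono_left nhdsWithin_le_nhds
  have := ge_of_tendsto hlim (b := fp - fz - inner ℝ (x - p) (p - z) / l) (by
    filter_upwards [Ioo_mem_nhdsGT (show (0:ℝ) < 1 by norm_num)] with a ha
    exact key a ha.1 ha.2)
  linarith


theorem moreau_value_rate
    {H : Type*} [NormedAddCommGroup H] [InnerProductSpace ℝ H] [CompleteSpace H]
    (Φ : H → EReal)
    (hΦbot : ∀ y, Φ y ≠ ⊥) (hΦproper : ∃ y, Φ y ≠ ⊤)
    (hΦconv : EConvexOn Φ) (hΦlsc : LowerSemicontinuous Φ)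
    (t₀ α : ℝ) (ht₀ : 0 < t₀)
    (β b lam β' b' lam' w' : ℝ → ℝ)
    (hβnonneg : ∀ t ≥ t₀, 0 ≤ β t)
    (hbpos : ∀ t ≥ t₀, 0 < b t)
    (hlampos : ∀ t ≥ t₀, 0 < lam t)
    (hβ' : ∀ t ≥ t₀, HasDerivAt β (β' t) t)
    (hb' : ∀ t ≥ t₀, HasDerivAt b (b' t) t)
    (hlam' : ∀ t ≥ t₀, HasDerivAt lam (lam' t) t)
    (hw' : ∀ t ≥ t₀, HasDerivAt (fun s => b s - β' s - β s / s) (w' t) t)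
    (x v acc p G' : ℝ → H)
    (hx : ∀ t ≥ t₀, HasDerivAt x (v t) t)
    (hv : ∀ t ≥ t₀, HasDerivAt v (acc t) t)
    (hp : ∀ t ≥ t₀, IsProxPt Φ (lam t) (x t) (p t))
    (hG' : ∀ t ≥ t₀, HasDerivAt (fun s => (lam s)⁻¹ • (x s - p s)) (G' t) t)
    (hode : ∀ t ≥ t₀, acc t + (α / t) • v t + β t • G' t
        + b t • ((lam t)⁻¹ • (x t - p t)) = 0)
    (hα : 1 ≤ α)
    (hlammono : MonotoneOn lam (Set.Ici t₀))
    (hw : ∀ t ≥ t₀, β' t + β t / t < b t)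
    (hAs1 : ∀ t ≥ t₀, 0 ≤ (α - 3) * (b t - β' t - β t / t) - t * w' t)
    (z : H) (hz : ∀ y, Φ z ≤ Φ y)
    :
    ∀ t ≥ t₀, moreau Φ (lam t) (x t) - (Φ z).toReal ≤
      (t₀ ^ 2 * (b t₀ - β' t₀ - β t₀ / t₀) * (moreau Φ (lam t₀) (x t₀) - (Φ z).toReal)
        + (1 / 2) * ‖(α - 1) • (x t₀ - z) + t₀ • v t₀
            + (t₀ * β t₀) • ((lam t₀)⁻¹ • (x t₀ - p t₀))‖ ^ 2)
        / (t ^ 2 * (b t - β' t - β t / t)) := by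
  -- finiteness
  obtain ⟨y0, hy0⟩ := hΦproper
  have hzfin : Φ z = ((Φ z).toReal : EReal) :=
    (EReal.coe_toReal (fun h => hy0 (top_le_iff.1 (h ▸ hz y0))) (hΦbot z)).symm
  have hpfin : ∀ t ≥ t₀, Φ (p t) = ((Φ (p t)).toReal : EReal) := by
    intro t ht
    refine (EReal.coe_toReal (fun h => ?_) (hΦbot _)).symm
    have h1 := hp t ht z
    rw [h, hzfin, EReal.top_add_coe, ← EReal.coe_add] at h1
    exact EReal.coe_ne_top _ (top_le_iff.1 h1)
  obtain ⟨m, hm⟩ : ∃ m : ℝ, (Φ z).toReal = m := ⟨_, rfl⟩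
  obtain ⟨f, hf⟩ : ∃ f : ℝ → ℝ, ∀ t, (Φ (p t)).toReal = f t := ⟨_, fun _ => rfl⟩
  rw [hm] at hzfin ⊢
  simp only [hf] at hpfin
  have hmo : ∀ t ≥ t₀, moreau Φ (lam t) (x t) = f t + ‖x t - p t‖ ^ 2 / (2 * lam t) := by
    intro t ht
    have : (⨅ y : H, Φ y + ((‖x t - y‖ ^ 2 / (2 * lam t) : ℝ) : EReal))
        = Φ (p t) + ((‖x t - p t‖ ^ 2 / (2 * lam t) : ℝ) : EReal) :=
      le_antisymm (iInf_le _ (p t)) (le_iInf (hp t ht))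
    rw [moreau, this, hpfin t ht, ← EReal.coe_add, EReal.toReal_coe]
  have hprox : ∀ s ≥ t₀, ∀ u ≥ t₀,
      f s + ‖x s - p s‖ ^ 2 / (2 * lam s) ≤ f u + ‖x s - p u‖ ^ 2 / (2 * lam s) := by
    intro s hs u hu
    have h := hp s hs (p u)
    rw [hpfin s hs, hpfin u hu] at h
    exact_mod_cast h
  have hfm : ∀ t ≥ t₀, m ≤ f t := by
    intro t ht
    have h := hz (p t)
    rw [hzfin, hpfin t ht] at h
    exact_mod_cast h
  have hgrad : ∀ t ≥ t₀, f t - m ≤ inner ℝ (x t - p t) (p t - z) / lam t := fun t ht =>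
    prox_grad Φ hΦconv (lam t) (hlampos t ht) (x t) (p t) z _ _ (hpfin t ht) hzfin (hp t ht)
  set G : ℝ → H := fun s => (lam s)⁻¹ • (x s - p s) with hGdef
  have hxp : ∀ t ≥ t₀, x t - p t = lam t • G t := by
    intro t ht
    simp only [hGdef]
    rw [smul_smul, mul_inv_cancel₀ (hlampos t ht).ne', one_smul]
  have hlamder : ∀ t > t₀, 0 ≤ lam' t := by
    intro t ht
    rw [← (hlam' t ht.le).deriv, ← derivWithin_of_mem_nhds (Ici_mem_nhds ht)]
    exact hlammono.derivWithin_nonneg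
  have hp' : ∀ t ≥ t₀, HasDerivAt p (v t - (lam t • G' t + lam' t • G t)) t := by
    intro t ht
    have h := (hx t ht).sub ((hlam' t ht).smul (hG' t ht))
    refine h.congr_of_eventuallyEq ?_
    have hne : ∀ᶠ s in nhds t, lam s ≠ 0 :=
      (hlam' t ht).continuousAt.eventually_ne (hlampos t ht).ne'
    filter_upwards [hne] with s hs
    simp only [Pi.sub_apply, Pi.smul_apply', hGdef]
    rw [smul_smul, mul_inv_cancel₀ hs, one_smul]
    abel
  have hφ := env_deriv t₀ f lam lam' x v p _ hlampos hlam' hx hp' hprox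
  set φ : ℝ → ℝ := fun s => f s + ‖x s - p s‖ ^ 2 / (2 * lam s) with hφdef
  set w : ℝ → ℝ := fun s => b s - β' s - β s / s with hwdef
  set u : ℝ → H := fun s => (α - 1) • (x s - z) + s • v s + (s * β s) • G s with hudef
  have hu : ∀ t ≥ t₀, HasDerivAt u (-(t * w t) • G t) t := by
    intro t ht
    have ht0 : t ≠ 0 := (lt_of_lt_of_le ht₀ ht).ne'
    have h1 := ((hx t ht).sub_const z).const_smul (α - 1)
    have h2 := (hasDerivAt_id t).smul (hv t ht)
    have h3 := ((hasDerivAt_id t).mul (hβ' t ht)).smul (hG' t ht)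
    refine ((h1.add h2).add h3).congr_deriv ?_
    have ho : acc t = -((α / t) • v t + β t • G' t + b t • G t) := by
      rw [eq_neg_iff_add_eq_zero, ← hode t ht]; abel
    simp only [Pi.mul_apply, id, ho, hwdef]
    change _ + _ + ((t * β t) • G' t + _ • G t) = _
    match_scalars <;> field_simp <;> ring
  have hE : ∀ t ≥ t₀, HasDerivWithinAt
      (fun s => s ^ 2 * w s * (φ s - m) + (1 / 2) * ‖u s‖ ^ 2)
      ((2 * t * w t + t ^ 2 * w' t) * (φ t - m)
        + t ^ 2 * w t * (inner ℝ (x t - p t) (v t) / lam t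
          - lam' t * ‖x t - p t‖ ^ 2 / (2 * lam t ^ 2))
        + inner ℝ (u t) (-(t * w t) • G t)) (Set.Ici t₀) t := by
    intro t ht
    have h1 := ((hasDerivAt_pow 2 t).mul (hw' t ht)).hasDerivWithinAt (s := Set.Ici t₀)
    have h2 := h1.mul ((hφ t ht).sub_const m)
    have h3 := ((hu t ht).norm_sq.const_mul (1 / 2)).hasDerivWithinAt (s := Set.Ici t₀)
    refine (h2.add h3).congr_deriv ?_
    simp only [Pi.mul_apply]
    push_cast
    ring
  have hanti : AntitoneOn (fun s => s ^ 2 * w s * (φ s - m) + (1 / 2) * ‖u s‖ ^ 2)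
      (Set.Ici t₀) := by
    refine antitoneOn_of_hasDerivWithinAt_nonpos (convex_Ici t₀)
      (fun t ht => (hE t ht).continuousWithinAt)
      (fun t ht => (hE t (interior_subset ht)).mono interior_subset) ?_
    intro t ht
    rw [interior_Ici] at ht
    have ht' : t₀ ≤ t := le_of_lt ht
    have htp : 0 < t := lt_trans ht₀ ht
    have hl := hlampos t ht'
    have hwp : 0 < w t := by have := hw t ht'; simp only [hwdef]; linarith
    have hx1 : x t - z = lam t • G t + (p t - z) := by rw [← hxp t ht']; abel
    have hg := hgrad t ht'
    have hφt : φ t = f t + lam t / 2 * ‖G t‖ ^ 2 := by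
      simp only [hφdef]
      rw [hxp t ht', norm_smul, mul_pow, Real.norm_eq_abs, sq_abs]
      field_simp
    rw [hxp t ht', real_inner_smul_left, mul_div_cancel_left₀ _ hl.ne'] at hg
    have hin : φ t - m ≤ inner ℝ (x t - z) (G t) := by
      rw [hx1, inner_add_left, real_inner_smul_left, real_inner_self_eq_norm_sq,
        real_inner_comm, hφt]
      have : 0 ≤ lam t * ‖G t‖ ^ 2 := by positivity
      linarith
    have hpos : 0 ≤ φ t - m := by
      have := hfm t ht'
      have : 0 ≤ lam t / 2 * ‖G t‖ ^ 2 := by positivity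
      rw [hφt]; linarith
    have hui : inner ℝ (u t) (-(t * w t) • G t) = -(t * w t) * ((α - 1) * inner ℝ (x t - z) (G t)
        + t * inner ℝ (G t) (v t) + t * β t * ‖G t‖ ^ 2) := by
      simp only [hudef]
      rw [inner_smul_right, inner_add_left, inner_add_left, real_inner_smul_left,
        real_inner_smul_left, real_inner_smul_left, real_inner_self_eq_norm_sq,
        real_inner_comm (v t)]
    have hlt : lam' t * ‖lam t • G t‖ ^ 2 / (2 * lam t ^ 2) = lam' t / 2 * ‖G t‖ ^ 2 := by
      rw [norm_smul, mul_pow, Real.norm_eq_abs, sq_abs]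
      field_simp
    rw [hui, hxp t ht', real_inner_smul_left, mul_div_cancel_left₀ _ hl.ne', hlt]
    have k1 : 0 ≤ t * w t * ((α - 1) * (inner ℝ (x t - z) (G t) - (φ t - m))) :=
      mul_nonneg (by positivity) (mul_nonneg (by linarith) (by linarith))
    have k2 : 0 ≤ t ^ 2 * w t * (lam' t / 2 * ‖G t‖ ^ 2) := by
      have := hlamder t ht
      positivity
    have k3 : 0 ≤ t * w t * (t * β t * ‖G t‖ ^ 2) := by
      have := hβnonneg t ht'
      positivity
    have k4 : 0 ≤ t * ((α - 3) * w t - t * w' t) * (φ t - m) :=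
      mul_nonneg (mul_nonneg htp.le (hAs1 t ht')) hpos
    nlinarith [k1, k2, k3, k4]
  intro t ht
  have htp : 0 < t := lt_of_lt_of_le ht₀ ht
  have hwp : 0 < w t := by have := hw t ht; simp only [hwdef]; linarith
  rw [hmo t ht, hmo t₀ le_rfl]
  have hfin := hanti (Set.mem_Ici.2 le_rfl) (Set.mem_Ici.2 ht) ht
  have hden : 0 < t ^ 2 * w t := by positivity
  refine (le_div_iff₀ hden).2 ?_
  have hn : 0 ≤ (1 / 2) * ‖u t‖ ^ 2 := by positivity
  have hfin2 : t ^ 2 * w t * (φ t - m) + (1 / 2) * ‖u t‖ ^ 2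
      ≤ t₀ ^ 2 * w t₀ * (φ t₀ - m) + (1 / 2) * ‖u t₀‖ ^ 2 := hfin
  change (φ t - m) * (t ^ 2 * w t) ≤ t₀ ^ 2 * w t₀ * (φ t₀ - m) + (1 / 2) * ‖u t₀‖ ^ 2
  linarith
end
end

section
/- Assume α ≥ 1, λ is nondecreasing on [t₀,∞), b(t) > β'(t) + β(t)/t (equivalently w(t) > 0) for every t ≥ t₀, and (α−3)·w(t) − t·w'(t) ≥ 0 for every t ≥ t₀. Then ∫_{t₀}^{∞} ( t²·w(t)·λ'(t)/2 + t²·β(t)·w(t) )·‖∇Φ_{λ(t)}(x(t))‖² dt < +∞. -/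
open Set MeasureTheory Filter Real

noncomputable section

theorem hasDerivWithinAt_squeeze_aux {f g h : ℝ → ℝ} {d t : ℝ} {S : Set ℝ}
    (hg : HasDerivWithinAt g d S t) (hh : HasDerivWithinAt h d S t)
    (hgt : g t = f t) (hht : h t = f t)
    (h1 : ∀ s ∈ S, g s ≤ f s) (h2 : ∀ s ∈ S, f s ≤ h s) : HasDerivWithinAt f d S t := by
  rw [hasDerivWithinAt_iff_isLittleO] at *
  have hsum := hg.norm_left.add hh.norm_left
  refine Asymptotics.IsBigO.trans_isLittleO (Asymptotics.IsBigO.of_bound 1 ?_) hsum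
  filter_upwards [self_mem_nhdsWithin] with s hs
  have a := h1 s hs
  have b := h2 s hs
  simp only [Real.norm_eq_abs, one_mul, smul_eq_mul]
  rw [abs_of_nonneg (a := |g s - g t - (s - t) * d| + |h s - h t - (s - t) * d|)
    (add_nonneg (abs_nonneg _) (abs_nonneg _)), abs_le]
  have e1 := neg_abs_le (g s - g t - (s - t) * d)
  have e2 := le_abs_self (h s - h t - (s - t) * d)
  have e3 := abs_nonneg (g s - g t - (s - t) * d)
  have e4 := abs_nonneg (h s - h t - (s - t) * d)
  constructor <;> linarith

theorem prox_subgrad_aux {H : Type*} [NormedAddCommGroup H] [InnerProductSpace ℝ H]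
    {Φ : H → EReal} (hconv : EConvexOn Φ) {l : ℝ} (hl : 0 < l) {x p z : H} {c m : ℝ}
    (hp : IsProxPt Φ l x p) (hc : Φ p = (c : EReal)) (hm : Φ z = (m : EReal)) :
    l * (c - m) ≤ inner ℝ (x - p) (p - z) := by
  have key : ∀ ε : ℝ, 0 < ε → ε ≤ 1 →
      l * (c - m) ≤ inner ℝ (x - p) (p - z) + ε * (‖p - z‖ ^ 2 / 2) := by
    intro ε h0 h1
    have a := hp ((1 - ε) • p + ε • z)
    have b := hconv p z (1 - ε) ε (by linarith) h0.le (by ring)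
    rw [hc, hm] at b
    rw [hc] at a
    have a2 := a.trans (add_le_add_left b _)
    have a3 : c + ‖x - p‖ ^ 2 / (2 * l) ≤ (1 - ε) * c + ε * m +
        ‖x - ((1 - ε) • p + ε • z)‖ ^ 2 / (2 * l) := by exact_mod_cast a2
    have e : x - ((1 - ε) • p + ε • z) = (x - p) + ε • (p - z) := by module
    rw [e, norm_add_sq_real, inner_smul_right, norm_smul, Real.norm_eq_abs, mul_pow, sq_abs] at a3
    have a4 : ε * (c - m) ≤ (2 * (ε * inner ℝ (x - p) (p - z)) + ε ^ 2 * ‖p - z‖ ^ 2) / (2 * l) := by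
      rw [add_div, add_div] at a3
      rw [add_div]
      linarith
    rw [le_div_iff₀ (by positivity)] at a4
    have : 0 ≤ ε * (inner ℝ (x - p) (p - z) + ε * (‖p - z‖ ^ 2 / 2) - l * (c - m)) := by
      nlinarith
    have := nonneg_of_mul_nonneg_right this h0
    linarith
  have ht : Tendsto (fun ε : ℝ => inner ℝ (x - p) (p - z) + ε * (‖p - z‖ ^ 2 / 2))
      (nhdsWithin 0 (Set.Ioi 0)) (nhds (inner ℝ (x - p) (p - z) + 0 * (‖p - z‖ ^ 2 / 2))) := by
    apply Tendsto.mono_left _ nhdsWithin_le_nhds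
    exact Continuous.tendsto (by fun_prop) 0
  rw [zero_mul, add_zero] at ht
  refine ge_of_tendsto ht ?_
  filter_upwards [Ioc_mem_nhdsGT (zero_lt_one (α := ℝ))] with ε hε
  exact key ε hε.1 hε.2

theorem quot_deriv_aux {H : Type*} [NormedAddCommGroup H] [InnerProductSpace ℝ H]
    {u : ℝ → H} {l : ℝ → ℝ} {u' : H} {l' t : ℝ} {S : Set ℝ}
    (hu : HasDerivWithinAt u u' S t) (hl : HasDerivWithinAt l l' S t) (h0 : 0 < l t) :
    HasDerivWithinAt (fun s => ‖u s‖ ^ 2 / (2 * l s))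
      (inner ℝ ((l t)⁻¹ • u t) u' - l' / 2 * ‖(l t)⁻¹ • u t‖ ^ 2) S t := by
  have h := hu.norm_sq.div (hl.const_mul 2) (by positivity)
  refine h.congr_deriv ?_
  rw [inner_smul_left, norm_smul, Real.norm_eq_abs, mul_pow |(l t)⁻¹|, sq_abs]
  simp only [conj_trivial]
  field_simp

theorem moreau_gradient_integral_finite
    {H : Type*} [NormedAddCommGroup H] [InnerProductSpace ℝ H] [CompleteSpace H]
    (Φ : H → EReal)
    (hΦbot : ∀ y, Φ y ≠ ⊥) (hΦproper : ∃ y, Φ y ≠ ⊤)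
    (hΦconv : EConvexOn Φ) (hΦlsc : LowerSemicontinuous Φ)
    (t₀ α : ℝ) (ht₀ : 0 < t₀)
    (β b lam β' b' lam' w' : ℝ → ℝ)
    (hβnonneg : ∀ t ≥ t₀, 0 ≤ β t)
    (hbpos : ∀ t ≥ t₀, 0 < b t)
    (hlampos : ∀ t ≥ t₀, 0 < lam t)
    (hβ' : ∀ t ≥ t₀, HasDerivAt β (β' t) t)
    (hb' : ∀ t ≥ t₀, HasDerivAt b (b' t) t)
    (hlam' : ∀ t ≥ t₀, HasDerivAt lam (lam' t) t)
    (hw' : ∀ t ≥ t₀, HasDerivAt (fun s => b s - β' s - β s / s) (w' t) t)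
    (x v acc p G' : ℝ → H)
    (hx : ∀ t ≥ t₀, HasDerivAt x (v t) t)
    (hv : ∀ t ≥ t₀, HasDerivAt v (acc t) t)
    (hp : ∀ t ≥ t₀, IsProxPt Φ (lam t) (x t) (p t))
    (hG' : ∀ t ≥ t₀, HasDerivAt (fun s => (lam s)⁻¹ • (x s - p s)) (G' t) t)
    (hode : ∀ t ≥ t₀, acc t + (α / t) • v t + β t • G' t
        + b t • ((lam t)⁻¹ • (x t - p t)) = 0)
    (hα : 1 ≤ α)
    (hlammono : MonotoneOn lam (Set.Ici t₀))
    (hw : ∀ t ≥ t₀, β' t + β t / t < b t)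
    (hAs1 : ∀ t ≥ t₀, 0 ≤ (α - 3) * (b t - β' t - β t / t) - t * w' t)
    (hargmin : ∃ z, ∀ y, Φ z ≤ Φ y)
    :
    ∫⁻ t in Set.Ici t₀, ENNReal.ofReal
      ((t ^ 2 * (b t - β' t - β t / t) * lam' t / 2
          + t ^ 2 * β t * (b t - β' t - β t / t))
        * ‖(lam t)⁻¹ • (x t - p t)‖ ^ 2) < ⊤ := by
  obtain ⟨z, hz⟩ := hargmin
  have hztop : Φ z ≠ ⊤ := by
    obtain ⟨y, hy⟩ := hΦproper
    exact ne_top_of_le_ne_top hy (hz y)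
  obtain ⟨m, hm⟩ : ∃ m : ℝ, Φ z = (m : EReal) :=
    ⟨(Φ z).toReal, (EReal.coe_toReal hztop (hΦbot z)).symm⟩
  have hptop : ∀ t ≥ t₀, Φ (p t) ≠ ⊤ := by
    intro t ht h
    have := hp t ht z
    rw [h, hm, EReal.top_add_coe, ← EReal.coe_add] at this
    exact EReal.coe_ne_top _ (top_le_iff.mp this)
  set c : ℝ → ℝ := fun t => (Φ (p t)).toReal with hcdef
  have hc : ∀ t ≥ t₀, Φ (p t) = (c t : EReal) := fun t ht =>
    (EReal.coe_toReal (hptop t ht) (hΦbot _)).symm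
  have hmc : ∀ t ≥ t₀, m ≤ c t := by
    intro t ht
    have := hz (p t)
    rw [hm, hc t ht] at this
    exact_mod_cast this
  have hprox : ∀ t ≥ t₀, ∀ s ≥ t₀, c t + ‖x t - p t‖ ^ 2 / (2 * lam t)
      ≤ c s + ‖x t - p s‖ ^ 2 / (2 * lam t) := by
    intro t ht s hs
    have := hp t ht (p s)
    rw [hc t ht, hc s hs] at this
    exact_mod_cast this
  set G : ℝ → H := fun s => (lam s)⁻¹ • (x s - p s) with hG
  set w : ℝ → ℝ := fun s => b s - β' s - β s / s with hwdef
  have hxp : ∀ t ≥ t₀, x t - p t = lam t • G t := by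
    intro t ht
    simp only [hG]
    rw [smul_inv_smul₀ (hlampos t ht).ne']
  set S := Set.Ici t₀ with hS
  -- derivative of the prox map
  have hpd : ∀ t ≥ t₀, ∃ p', HasDerivWithinAt p p' S t := by
    intro t ht
    have h1 := (hx t ht).hasDerivWithinAt (s := S) |>.sub
      (((hlam' t ht).hasDerivWithinAt (s := S)).smul ((hG' t ht).hasDerivWithinAt (s := S)))
    refine ⟨_, h1.congr (fun s hs => ?_) ?_⟩
    · have := hxp s hs
      simp only [Pi.sub_apply, Pi.smul_apply', hG] at this ⊢
      rw [← this]; abel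
    · have := hxp t ht
      simp only [Pi.sub_apply, Pi.smul_apply', hG] at this ⊢
      rw [← this]; abel
  set φ : ℝ → ℝ := fun t => c t + ‖x t - p t‖ ^ 2 / (2 * lam t) - m with hφ
  have hφ0 : ∀ t ≥ t₀, 0 ≤ φ t := by
    intro t ht
    have h1 := hmc t ht
    have h2 := hlampos t ht
    have : 0 ≤ ‖x t - p t‖ ^ 2 / (2 * lam t) := by positivity
    simp only [hφ]; linarith
  have hφd : ∀ t ≥ t₀, HasDerivWithinAt φ (inner ℝ (G t) (v t) - lam' t / 2 * ‖G t‖ ^ 2) S t := by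
    intro t ht
    obtain ⟨p', hp'⟩ := hpd t ht
    have hxw := (hx t ht).hasDerivWithinAt (s := S)
    have hlw := (hlam' t ht).hasDerivWithinAt (s := S)
    have hup : HasDerivWithinAt (fun s => c t + ‖x s - p t‖ ^ 2 / (2 * lam s) - m)
        (inner ℝ (G t) (v t) - lam' t / 2 * ‖G t‖ ^ 2) S t :=
      ((quot_deriv_aux (hxw.sub_const (p t)) hlw (hlampos t ht)).const_add (c t)).sub_const m
    have hlo1 := quot_deriv_aux (hxw.sub hp') hlw (hlampos t ht)
    have hlo2 := quot_deriv_aux (hp'.const_sub (x t)) (hasDerivWithinAt_const t S (lam t))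
      (hlampos t ht)
    have hlo : HasDerivWithinAt (fun s => φ t + (‖x s - p s‖ ^ 2 / (2 * lam s)
        - ‖x t - p s‖ ^ 2 / (2 * lam t)))
        (inner ℝ (G t) (v t) - lam' t / 2 * ‖G t‖ ^ 2) S t := by
      refine ((hlo1.sub hlo2).const_add (φ t)).congr_deriv ?_
      simp only [Pi.sub_apply, hG, inner_sub_right, inner_neg_right]
      ring
    refine hasDerivWithinAt_squeeze_aux hlo hup (by ring) rfl ?_ ?_
    · intro s hs
      have := hprox t ht s hs
      simp only [hφ]; linarith
    · intro s hs
      have := hprox s hs t ht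
      simp only [hφ]; linarith
  set q : ℝ → H := fun t => (α - 1) • (x t - z) + t • (v t + β t • G t) with hq
  have hqd : ∀ t ≥ t₀, HasDerivWithinAt q (-(t * w t) • G t) S t := by
    intro t ht
    have htpos : 0 < t := lt_of_lt_of_le ht₀ ht
    have h := (((hx t ht).sub_const z).const_smul (α - 1)).add
      ((hasDerivAt_id t).smul ((hv t ht).add ((hβ' t ht).smul (hG' t ht))))
    have hacc : acc t = -((α / t) • v t + β t • G' t + b t • G t) := by
      have := hode t ht
      rw [eq_neg_iff_add_eq_zero, ← this]
      simp only [hG]; abel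
    have h' : HasDerivAt q _ t := h
    refine (h'.congr_deriv ?_).hasDerivWithinAt
    rw [hacc]
    simp only [hwdef, id, Pi.add_apply, Pi.smul_apply']
    change _ + (t • (-((α / t) • v t + β t • G' t + b t • G t) + (β t • G' t + β' t • G t))
      + (1:ℝ) • (v t + β t • G t)) = _
    match_scalars <;> field_simp <;> ring
  set E : ℝ → ℝ := fun t => t ^ 2 * w t * φ t + ‖q t‖ ^ 2 / 2 with hE
  set E' : ℝ → ℝ := fun t => (2 * t * w t + t ^ 2 * w' t) * φ t
    + t ^ 2 * w t * (inner ℝ (G t) (v t) - lam' t / 2 * ‖G t‖ ^ 2)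
    + inner ℝ (q t) (-(t * w t) • G t) with hE'
  have hEd : ∀ t ≥ t₀, HasDerivWithinAt E (E' t) S t := by
    intro t ht
    have h1 := ((hasDerivAt_pow 2 t).mul (hw' t ht)).hasDerivWithinAt (s := S)
    have h2 := (h1.mul (hφd t ht)).add ((hqd t ht).norm_sq.div_const 2)
    have h3 : HasDerivWithinAt E _ S t := h2
    refine h3.congr_deriv ?_
    simp only [hE', Pi.mul_apply, hwdef]
    push_cast
    ring
  have hwpos : ∀ t ≥ t₀, 0 < w t := by
    intro t ht
    have := hw t ht
    simp only [hwdef]; linarith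
  have hE0 : ∀ t ≥ t₀, 0 ≤ E t := by
    intro t ht
    have h1 := hwpos t ht
    have h2 := hφ0 t ht
    simp only [hE]; positivity
  set F : ℝ → ℝ := fun t => (t ^ 2 * w t * lam' t / 2 + t ^ 2 * β t * w t) * ‖G t‖ ^ 2 with hF
  have hEF : ∀ t ≥ t₀, F t ≤ -E' t := by
    intro t ht
    have htpos : 0 < t := lt_of_lt_of_le ht₀ ht
    have h1 := hwpos t ht
    have h2 := hφ0 t ht
    have hl := hlampos t ht
    have h3 := prox_subgrad_aux hΦconv hl (hp t ht) (hc t ht) hm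
    have h4 : φ t ≤ inner ℝ (G t) (x t - z) := by
      have e : x t - z = lam t • G t + (p t - z) := by rw [← hxp t ht]; abel
      have e2 : ‖x t - p t‖ ^ 2 / (2 * lam t) = lam t * ‖G t‖ ^ 2 / 2 := by
        rw [hxp t ht, norm_smul, Real.norm_eq_abs, mul_pow, sq_abs]
        field_simp
      rw [hxp t ht, inner_smul_left, conj_trivial] at h3
      have h5 := le_of_mul_le_mul_left h3 hl
      rw [e, inner_add_right, inner_smul_right, real_inner_self_eq_norm_sq]
      simp only [hφ]
      rw [e2]
      have : 0 ≤ lam t * ‖G t‖ ^ 2 := by positivity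
      linarith
    have h6 : 0 ≤ ((α - 3) * w t - t * w' t) * φ t := mul_nonneg (hAs1 t ht) h2
    have h7 : inner ℝ (q t) (-(t * w t) • G t) = -(t * w t) * ((α - 1) * inner ℝ (G t) (x t - z)
        + t * (inner ℝ (G t) (v t) + β t * ‖G t‖ ^ 2)) := by
      rw [real_inner_comm]
      simp only [hq, inner_smul_left, inner_add_right, inner_smul_right,
        real_inner_self_eq_norm_sq, conj_trivial]
      ring
    have h8 : 0 ≤ t * w t * (α - 1) * (inner ℝ (G t) (x t - z) - φ t) :=
      mul_nonneg (mul_nonneg (by positivity) (by linarith)) (by linarith)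
    have h9 := mul_nonneg htpos.le h6
    simp only [hF, hE']
    rw [h7]
    nlinarith
  have hlam0 : ∀ t > t₀, 0 ≤ lam' t := by
    intro t ht
    have h1 : derivWithin lam S t = lam' t :=
      ((hlam' t ht.le).hasDerivWithinAt).derivWithin (uniqueDiffOn_Ici t₀ t ht.le)
    rw [← h1]
    exact hlammono.derivWithin_nonneg
  have hF0 : ∀ t > t₀, 0 ≤ F t := by
    intro t ht
    have h1 := hwpos t ht.le
    have h2 := hlam0 t ht
    have h3 := hβnonneg t ht.le
    simp only [hF]; positivity
  have hEd' : ∀ t ∈ Set.Ioi t₀, HasDerivAt E (E' t) t := fun t ht =>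
    (hEd t (le_of_lt ht)).hasDerivAt (Ici_mem_nhds ht)
  have hE'neg : ∀ t ∈ Set.Ioi t₀, E' t ≤ 0 := by
    intro t ht
    have := hEF t (le_of_lt ht)
    have := hF0 t ht
    linarith
  have hanti : AntitoneOn E S := by
    refine antitoneOn_of_deriv_nonpos (convex_Ici t₀)
      (fun t ht => (hEd t ht).continuousWithinAt) ?_ ?_
    · intro t ht
      rw [interior_Ici] at ht
      exact (hEd' t ht).differentiableAt.differentiableWithinAt
    · intro t ht
      rw [interior_Ici] at ht
      rw [(hEd' t ht).deriv]
      exact hE'neg t ht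
  have hlim : ∃ l, Tendsto E atTop (nhds l) := by
    have hA : Antitone (fun t => E (max t t₀)) := fun r s hrs =>
      hanti (Set.mem_Ici.mpr (le_max_right _ _)) (Set.mem_Ici.mpr (le_max_right _ _)) (max_le_max_right _ hrs)
    have hB : BddBelow (Set.range fun t => E (max t t₀)) := by
      refine ⟨0, ?_⟩
      rintro _ ⟨t, rfl⟩
      exact hE0 _ (le_max_right _ _)
    refine ⟨_, (tendsto_atTop_ciInf hA hB).congr' ?_⟩
    filter_upwards [eventually_ge_atTop t₀] with t ht
    rw [max_eq_left ht]
  obtain ⟨l, hl⟩ := hlim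
  have hint : IntegrableOn E' (Set.Ioi t₀) :=
    integrableOn_Ioi_deriv_of_nonpos (hEd t₀ le_rfl).continuousWithinAt hEd' hE'neg hl
  have hint2 := hint.neg.lintegral_lt_top
  change ∫⁻ t in Set.Ici t₀, ENNReal.ofReal (F t) < ⊤
  rw [setLIntegral_congr (Ioi_ae_eq_Ici (a := t₀)).symm]
  refine lt_of_le_of_lt (setLIntegral_mono' measurableSet_Ioi fun t ht => ?_) hint2
  exact ENNReal.ofReal_le_ofReal (hEF t (le_of_lt ht))
end
end

section
/- Assume α > 1, λ is nondecreasing on [t₀,∞), b(t) > β'(t) + β(t)/t (equivalently w(t) > 0) for every t ≥ t₀, and there exists ε ∈ (0, α−1) such that (α−3)·w(t) − t·w'(t) ≥ ε·b(t) for every t ≥ t₀. Then the trajectory is bounded, i.e. sup_{t ≥ t₀} ‖x(t)‖ < +∞. -/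
open Set MeasureTheory Filter Real

noncomputable section

lemma aux_prox {H : Type*} [NormedAddCommGroup H] [InnerProductSpace ℝ H]
    (Φ : H → EReal) (hconv : EConvexOn Φ) (l : ℝ) (hl : 0 < l) (x p z : H)
    (F m : ℝ) (hF : Φ p = F) (hm : Φ z = m) (hp : IsProxPt Φ l x p) :
    F - m ≤ l⁻¹ * inner ℝ (x - p) (p - z) := by
  have key : ∀ a ∈ Set.Ioo (0:ℝ) 1,
      F - m ≤ l⁻¹ * inner ℝ (x - p) (p - z) + a * (‖z - p‖ ^ 2 / (2 * l)) := by
    rintro a ⟨ha0, ha1⟩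
    have h1 := hp ((1 - a) • p + a • z)
    have h2 := hconv p z (1 - a) a (by linarith) ha0.le (by ring)
    have h3 := h1.trans (add_le_add_left h2 _)
    rw [hF, hm] at h3
    have h4 : F + ‖x - p‖ ^ 2 / (2 * l) ≤ (1 - a) * F + a * m
        + ‖x - ((1 - a) • p + a • z)‖ ^ 2 / (2 * l) := by exact_mod_cast h3
    have h5 : x - ((1 - a) • p + a • z) = (x - p) + a • (p - z) := by module
    rw [h5, norm_add_sq_real, inner_smul_right, norm_smul, mul_pow, Real.norm_eq_abs, sq_abs,
      norm_sub_rev p z] at h4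
    have h6 : (‖x - p‖ ^ 2 + 2 * (a * inner ℝ (x - p) (p - z)) + a ^ 2 * ‖z - p‖ ^ 2) / (2 * l)
        = ‖x - p‖ ^ 2 / (2 * l) + a * (l⁻¹ * inner ℝ (x - p) (p - z)
          + a * (‖z - p‖ ^ 2 / (2 * l))) := by field_simp; ring
    rw [h6] at h4
    have h7 : a * (F - m) ≤ a * (l⁻¹ * inner ℝ (x - p) (p - z)
          + a * (‖z - p‖ ^ 2 / (2 * l))) := by linarith
    exact le_of_mul_le_mul_left h7 ha0
  have hT : Tendsto (fun a : ℝ => l⁻¹ * inner ℝ (x - p) (p - z) + a * (‖z - p‖ ^ 2 / (2 * l)))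
      (nhdsWithin 0 (Set.Ioi 0)) (nhds (l⁻¹ * inner ℝ (x - p) (p - z))) := by
    have : Continuous (fun a : ℝ => l⁻¹ * inner ℝ (x - p) (p - z)
      + a * (‖z - p‖ ^ 2 / (2 * l))) := by fun_prop
    have h := (this.tendsto 0).mono_left (nhdsWithin_le_nhds (s := Set.Ioi 0))
    simpa using h
  refine ge_of_tendsto hT ?_
  filter_upwards [Ioo_mem_nhdsGT (show (0:ℝ) < 1 by norm_num)] with a ha using key a ha

lemma aux_touch (f : ℝ → ℝ) (t₀ : ℝ) (hc : ContinuousOn f (Set.Ici t₀))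
    (hd : ∀ t ≥ t₀, ∃ h : ℝ → ℝ, ∃ d, HasDerivAt h d t ∧ d ≤ 0 ∧ h t = f t ∧
      ∀ s ≥ t, f s ≤ h s) : ∀ t ≥ t₀, f t ≤ f t₀ := by
  intro t ht
  refine image_le_of_liminf_slope_right_le_deriv_boundary (f := f) (a := t₀) (b := t)
    (B := fun _ => f t₀) (B' := fun _ => 0) (hc.mono Set.Icc_subset_Ici_self) le_rfl
    continuousOn_const (fun _ _ => hasDerivWithinAt_const _ _ _) ?_ ⟨ht, le_rfl⟩
  intro y hy r hr
  obtain ⟨h, d, h1, h2, h3, h4⟩ := hd y hy.1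
  apply Filter.Eventually.frequently
  have h5 := (hasDerivWithinAt_iff_tendsto_slope' (s := Set.Ioi y) (by simp)).1
    h1.hasDerivWithinAt
  filter_upwards [h5.eventually (gt_mem_nhds (lt_of_le_of_lt h2 hr)), self_mem_nhdsWithin]
    with s hs hs'
  have hs' : y < s := hs'
  refine lt_of_le_of_lt ?_ hs
  rw [slope_def_field, slope_def_field, h3]
  have := h4 s hs'.le
  have := sub_pos.2 hs'
  gcongr

lemma aux_scalar (t w w' β β' b ε α c φ lam lam' P q r n k : ℝ) (ht : 0 < t)
    (hw : w = b - β' - β / t) (hwp : 0 < w) (hβ : 0 ≤ β) (hε : 0 < ε) (hc : c = α - 1 - ε)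
    (hc0 : 0 < c) (hφ : 0 ≤ φ) (hl' : 0 ≤ lam') (hn : 0 ≤ n) (hk : 0 ≤ k) 
    (hA : ε * b ≤ (α - 3) * w - t * w') (hP : φ ≤ P) :
    (2 * t * w + t ^ 2 * w' + ε * (β + t * β')) * φ + (t ^ 2 * w + ε * (t * β)) * (q - lam' / 2 * n)
      + (- c * ε * r - c * t * w * P - t * ε * k - t ^ 2 * w * q - t * β * ε * q
        - t ^ 2 * β * w * n) + c * ε * r ≤ 0 := by
  have e1 : β + t * β' = t * (b - w) := by rw [hw]; field_simp; ring
  rw [e1]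
  have i1 : 0 ≤ (c * t * w) * (P - φ) := mul_nonneg (by positivity) (by linarith)
  have i2 : 0 ≤ t * ε * k := by positivity
  have i3 : 0 ≤ t ^ 2 * β * w * n := by positivity
  have i4 : 0 ≤ (t ^ 2 * w + ε * (t * β)) * (lam' / 2 * n) := by positivity
  have i5 : 0 ≤ (t * φ) * ((α - 3) * w - t * w' - ε * b) := mul_nonneg (by positivity) (by linarith)
  subst hc
  linarith

theorem trajectory_bounded
    {H : Type*} [NormedAddCommGroup H] [InnerProductSpace ℝ H] [CompleteSpace H]
    (Φ : H → EReal)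
    (hΦbot : ∀ y, Φ y ≠ ⊥) (hΦproper : ∃ y, Φ y ≠ ⊤)
    (hΦconv : EConvexOn Φ) (hΦlsc : LowerSemicontinuous Φ)
    (t₀ α : ℝ) (ht₀ : 0 < t₀)
    (β b lam β' b' lam' w' : ℝ → ℝ)
    (hβnonneg : ∀ t ≥ t₀, 0 ≤ β t)
    (hbpos : ∀ t ≥ t₀, 0 < b t)
    (hlampos : ∀ t ≥ t₀, 0 < lam t)
    (hβ' : ∀ t ≥ t₀, HasDerivAt β (β' t) t)
    (hb' : ∀ t ≥ t₀, HasDerivAt b (b' t) t)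
    (hlam' : ∀ t ≥ t₀, HasDerivAt lam (lam' t) t)
    (hw' : ∀ t ≥ t₀, HasDerivAt (fun s => b s - β' s - β s / s) (w' t) t)
    (x v acc p G' : ℝ → H)
    (hx : ∀ t ≥ t₀, HasDerivAt x (v t) t)
    (hv : ∀ t ≥ t₀, HasDerivAt v (acc t) t)
    (hp : ∀ t ≥ t₀, IsProxPt Φ (lam t) (x t) (p t))
    (hG' : ∀ t ≥ t₀, HasDerivAt (fun s => (lam s)⁻¹ • (x s - p s)) (G' t) t)
    (hode : ∀ t ≥ t₀, acc t + (α / t) • v t + β t • G' t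
        + b t • ((lam t)⁻¹ • (x t - p t)) = 0)
    (hα : 1 < α)
    (hlammono : MonotoneOn lam (Set.Ici t₀))
    (hw : ∀ t ≥ t₀, β' t + β t / t < b t)
    (hAs2 : ∃ ε, 0 < ε ∧ ε < α - 1 ∧
      ∀ t ≥ t₀, ε * b t ≤ (α - 3) * (b t - β' t - β t / t) - t * w' t)
    (hargmin : ∃ z, ∀ y, Φ z ≤ Φ y)
    :
    ∃ M : ℝ, ∀ t ≥ t₀, ‖x t‖ ≤ M := by
  obtain ⟨ε, hε, hεα, hAs⟩ := hAs2
  obtain ⟨z, hz⟩ := hargmin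
  obtain ⟨y0, hy0⟩ := hΦproper
  have hzt : Φ z ≠ ⊤ := ne_top_of_le_ne_top hy0 (hz y0)
  obtain ⟨m, hm⟩ : ∃ m : ℝ, Φ z = m := ⟨(Φ z).toReal, (EReal.coe_toReal hzt (hΦbot z)).symm⟩
  have hpt : ∀ t ≥ t₀, Φ (p t) ≠ ⊤ := by
    intro t ht h
    have h1 := hp t ht z
    rw [h, hm, EReal.top_add_coe, ← EReal.coe_add] at h1
    exact EReal.coe_ne_top _ (top_le_iff.1 h1)
  obtain ⟨F, hF⟩ : ∃ F : ℝ → ℝ, ∀ t ≥ t₀, Φ (p t) = F t :=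
    ⟨fun t => (Φ (p t)).toReal, fun t ht => (EReal.coe_toReal (hpt t ht) (hΦbot _)).symm⟩
  have hmF : ∀ t ≥ t₀, m ≤ F t := by
    intro t ht
    have := hz (p t)
    rw [hm, hF t ht] at this
    exact_mod_cast this
  have hFF : ∀ s ≥ t₀, ∀ t ≥ t₀, F s + ‖x s - p s‖ ^ 2 / (2 * lam s)
      ≤ F t + ‖x s - p t‖ ^ 2 / (2 * lam s) := by
    intro s hs t ht
    have := hp s hs (p t)
    rw [hF t ht, hF s hs] at this
    exact_mod_cast this
  have hFm : ∀ t ≥ t₀, F t - m ≤ (lam t)⁻¹ * inner ℝ (x t - p t) (p t - z) := fun t ht =>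
    aux_prox Φ hΦconv (lam t) (hlampos t ht) _ _ _ _ _ (hF t ht) hm (hp t ht)
  have hlam0 : ∀ t ≥ t₀, 0 ≤ lam' t := by
    intro t ht
    have h1 := hlammono.derivWithin_nonneg (x := t)
    rwa [(hlam' t ht).hasDerivWithinAt.derivWithin (uniqueDiffOn_Ici t₀ t ht)] at h1
  set G : ℝ → H := fun s => (lam s)⁻¹ • (x s - p s) with hG
  have hxp : ∀ t ≥ t₀, x t - p t = lam t • G t := by
    intro t ht
    rw [hG, smul_inv_smul₀ (hlampos t ht).ne']
  obtain ⟨w, hwdef⟩ : ∃ w : ℝ → ℝ, w = fun s => b s - β' s - β s / s := ⟨_, rfl⟩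
  rw [← hwdef] at hw'
  have hwpos : ∀ t ≥ t₀, 0 < w t := by
    intro t ht; rw [hwdef]; have := hw t ht; simp only; linarith
  obtain ⟨c, hc⟩ : ∃ c, c = α - 1 - ε := ⟨_, rfl⟩
  have hc0 : 0 < c := by linarith
  have hxc : ContinuousOn x (Set.Ici t₀) := fun t ht => (hx t ht).continuousAt.continuousWithinAt
  have hvc : ContinuousOn v (Set.Ici t₀) := fun t ht => (hv t ht).continuousAt.continuousWithinAt
  have hlc : ContinuousOn lam (Set.Ici t₀) :=
    fun t ht => (hlam' t ht).continuousAt.continuousWithinAt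
  have hwc : ContinuousOn w (Set.Ici t₀) := fun t ht => (hw' t ht).continuousAt.continuousWithinAt
  have hβc : ContinuousOn β (Set.Ici t₀) := fun t ht => (hβ' t ht).continuousAt.continuousWithinAt
  have hGc : ContinuousOn G (Set.Ici t₀) := fun t ht => (hG' t ht).continuousAt.continuousWithinAt
  have hpc : ContinuousOn p (Set.Ici t₀) := by
    refine (hxc.sub (hlc.smul hGc)).congr ?_
    intro t ht
    have := hxp t ht
    simp only [Pi.sub_apply, Pi.smul_apply', ← this]
    abel
  obtain ⟨φ, hφ⟩ : ∃ φ : ℝ → ℝ, φ = fun s => F s - m + ‖x s - p s‖ ^ 2 / (2 * lam s) := ⟨_, rfl⟩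
  have hφ0 : ∀ t ≥ t₀, 0 ≤ φ t := by
    intro t ht
    have h1 := hmF t ht
    have h2 := hlampos t ht
    have h3 : 0 ≤ ‖x t - p t‖ ^ 2 / (2 * lam t) := by positivity
    rw [hφ]; simp only; linarith
  have hφc : ContinuousOn φ (Set.Ici t₀) := by
    intro t ht
    have ht' : t₀ ≤ t := ht
    have hl2 : (2 * lam t) ≠ 0 := by have := hlampos t ht'; positivity
    have cx := hxc t ht
    have cl := hlc t ht
    have cp := hpc t ht
    have c1 : ContinuousWithinAt (fun s => F t - m + ‖x s - p t‖ ^ 2 / (2 * lam s))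
        (Set.Ici t₀) t :=
      continuousWithinAt_const.add
        (((cx.sub continuousWithinAt_const).norm.pow 2).div (continuousWithinAt_const.mul cl) hl2)
    have c2 : ContinuousWithinAt (fun s => φ t - (‖x t - p s‖ ^ 2 / (2 * lam t)
        - ‖x s - p s‖ ^ 2 / (2 * lam s))) (Set.Ici t₀) t :=
      continuousWithinAt_const.sub
        ((((continuousWithinAt_const.sub cp).norm.pow 2).div continuousWithinAt_const hl2).sub
        (((cx.sub cp).norm.pow 2).div (continuousWithinAt_const.mul cl) hl2))
    have e1 : F t - m + ‖x t - p t‖ ^ 2 / (2 * lam t) = φ t := by rw [hφ]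
    have c1' := c1.tendsto
    have c2' := c2.tendsto
    rw [e1] at c1'
    rw [sub_self, sub_zero] at c2'
    refine tendsto_of_tendsto_of_tendsto_of_le_of_le' c2' c1' ?_ ?_
    · filter_upwards [self_mem_nhdsWithin] with s hs
      have := hFF t ht' s hs
      simp only [hφ]; linarith
    · filter_upwards [self_mem_nhdsWithin] with s hs
      have := hFF s hs t ht'
      simp only [hφ]; linarith
  obtain ⟨R, hR⟩ : ∃ R : ℝ → ℝ, R = fun s => 1 / 2 * ‖c • (x s - z) + s • (v s + β s • G s)‖ ^ 2
      + c * ε / 2 * ‖x s - z‖ ^ 2 := ⟨_, rfl⟩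
  obtain ⟨A, hA⟩ : ∃ A : ℝ → ℝ, A = fun s => s ^ 2 * w s + ε * (s * β s) := ⟨_, rfl⟩
  have hA0 : ∀ t ≥ t₀, 0 ≤ A t := by
    intro t ht
    have h0 : 0 < t := lt_of_lt_of_le ht₀ ht
    have h1 := hwpos t ht
    have h2 := hβnonneg t ht
    rw [hA]; positivity
  have hmain : ∀ t ≥ t₀, A t * φ t + R t ≤ A t₀ * φ t₀ + R t₀ := by
    refine aux_touch (fun t => A t * φ t + R t) t₀ ?_ ?_
    · have hRc : ContinuousOn R (Set.Ici t₀) := by rw [hR]; fun_prop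
      have hAc : ContinuousOn A (Set.Ici t₀) := by rw [hA]; fun_prop
      exact (hAc.mul hφc).add hRc
    · intro t ht
      have h0 : 0 < t := lt_of_lt_of_le ht₀ ht
      have hl := hlampos t ht
      have hl2 : (2 * lam t) ≠ 0 := by positivity
      have dA := (((hasDerivAt_id t).pow 2).mul (hw' t ht)).add
        ((((hasDerivAt_id t).mul (hβ' t ht))).const_mul ε)
      have dh := ((((hx t ht).sub_const (p t)).norm_sq).div ((hlam' t ht).const_mul 2)
        hl2).const_add (F t - m)
      have du := (((hx t ht).sub_const z).const_smul c).add
        ((hasDerivAt_id t).smul ((hv t ht).add ((hβ' t ht).smul (hG' t ht))))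
      have dR := (du.norm_sq.const_mul (1/2)).add
        ((((hx t ht).sub_const z).norm_sq).const_mul (c * ε / 2))
      have dE := (dA.mul dh).add dR
      refine ⟨_, _, dE, ?_, ?_, ?_⟩
      · have hu' : c • v t + (t • (acc t + (β t • G' t + β' t • G t)) + (1:ℝ) • (v t + β t • G t))
            = -(ε • v t) - (t * w t) • G t := by
          have ha : acc t = - ((α / t) • v t) - β t • G' t - b t • G t := by
            have := hode t ht
            rw [← sub_eq_zero, ← this]; abel
          rw [ha, hwdef, hc]
          match_scalars <;> field_simp <;> ring
        have hin : inner ℝ (c • (x t - z) + t • (v t + β t • G t)) (-(ε • v t) - (t * w t) • G t)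
          = (- c * ε * inner ℝ (x t - z) (v t) - c * t * w t * inner ℝ (G t) (x t - z)
            - t * ε * ‖v t‖ ^ 2 - t ^ 2 * w t * inner ℝ (G t) (v t)
            - t * β t * ε * inner ℝ (G t) (v t) - t ^ 2 * β t * w t * ‖G t‖ ^ 2) := by
          simp only [inner_add_left, inner_sub_right, inner_neg_right, inner_smul_left,
            inner_smul_right, smul_add, real_inner_self_eq_norm_sq, RCLike.conj_to_real,
            real_inner_comm (G t) (v t), real_inner_comm (G t) (x t), real_inner_comm (G t) z, inner_sub_left]
          ring
        have hφt : φ t = F t - m + ‖x t - p t‖ ^ 2 / (2 * lam t) := by rw [hφ]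
        have hP : φ t ≤ inner ℝ (G t) (x t - z) := by
          have h1 := hFm t ht
          have h2 : x t - z = (x t - p t) + (p t - z) := by abel
          rw [hφt, h2, inner_add_right, hxp t ht, norm_smul, inner_smul_right,
            real_inner_self_eq_norm_sq, mul_pow, Real.norm_eq_abs, sq_abs]
          rw [hxp t ht, inner_smul_left, RCLike.conj_to_real, inv_mul_cancel_left₀ hl.ne'] at h1
          have h3 : lam t ^ 2 * ‖G t‖ ^ 2 / (2 * lam t) = lam t * ‖G t‖ ^ 2 / 2 := by field_simp
          have h4 : 0 ≤ lam t * ‖G t‖ ^ 2 := by positivity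
          rw [h3]; linarith
        have hAs' := hAs t ht
        have hwt : w t = b t - β' t - β t / t := by rw [hwdef]
        rw [← hwt] at hAs'
        have hfin := aux_scalar t (w t) (w' t) (β t) (β' t) (b t) ε α c (φ t) (lam t) (lam' t)
          (inner ℝ (G t) (x t - z)) (inner ℝ (G t) (v t)) (inner ℝ (x t - z) (v t))
          (‖G t‖ ^ 2) (‖v t‖ ^ 2) h0 hwt (hwpos t ht) (hβnonneg t ht) hε hc hc0 (hφ0 t ht)
          (hlam0 t ht) (by positivity) (by positivity) hAs' hP
        rw [← hin, ← hu'] at hfin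
        have hq : (2 * inner ℝ (x t - p t) (v t) * (2 * lam t) - ‖x t - p t‖ ^ 2 * (2 * lam' t))
            / (2 * lam t) ^ 2 = inner ℝ (G t) (v t) - lam' t / 2 * ‖G t‖ ^ 2 := by
          rw [hxp t ht, norm_smul, inner_smul_left, mul_pow, Real.norm_eq_abs, sq_abs,
            RCLike.conj_to_real]
          field_simp
        rw [← hq, hφt] at hfin
        refine le_trans (le_of_eq ?_) hfin
        simp
        ring
      · simp [hφ, hA, hR]
      · intro s hs
        have hs' : s ≥ t₀ := le_trans ht hs
        have h1 : φ s ≤ F t - m + ‖x s - p t‖ ^ 2 / (2 * lam s) := by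
          have := hFF s hs' t ht
          simp only [hφ]; linarith
        have h2 := mul_le_mul_of_nonneg_left h1 (hA0 s hs')
        have h3 : A s * φ s + R s ≤ A s * (F t - m + ‖x s - p t‖ ^ 2 / (2 * lam s)) + R s := by
          linarith
        refine h3.trans (le_of_eq ?_)
        simp [hA, hR]
  obtain ⟨C, hC⟩ : ∃ C, C = A t₀ * φ t₀ + R t₀ := ⟨_, rfl⟩
  refine ⟨‖z‖ + √(C / (c * ε / 2)), fun t ht => ?_⟩
  have h1 := hmain t ht
  have h2 := mul_nonneg (hA0 t ht) (hφ0 t ht)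
  have h3 : c * ε / 2 * ‖x t - z‖ ^ 2 ≤ R t := by
    simp only [hR]
    have : 0 ≤ 1 / 2 * ‖c • (x t - z) + t • (v t + β t • G t)‖ ^ 2 := by positivity
    linarith
  have h4 : ‖x t - z‖ ≤ √(C / (c * ε / 2)) := by
    apply Real.le_sqrt_of_sq_le
    rw [le_div_iff₀ (by positivity)]
    linarith
  have h5 : ‖x t‖ ≤ ‖z‖ + ‖x t - z‖ := by
    have := norm_add_le z (x t - z)
    rwa [add_sub_cancel] at this
  linarith
end
end

section
/- Assume α > 1, both λ and β are nondecreasing on [t₀,∞), b(t) > β'(t) + β(t)/t (equivalently w(t) > 0) for every t ≥ t₀, there exists ε ∈ (0, α−1) with (α−3)·w(t) − t·w'(t) ≥ ε·b(t) for every t ≥ t₀, ∫_{t₀}^{∞} [ λ'(t)²·t³·β(t)²/λ(t)⁴ − λ'(t)·t²·b(t)/(2·λ(t)²) ]_+ dt < +∞ (where [·]_+ denotes the positive part), and there exists C > 0 with (d/dt)(t²·b(t)) ≤ C·t·b(t) for every t ≥ t₀. Then t²·b(t)·(Φ_{λ(t)}(x(t)) − Φ*) → 0 as t → +∞, i.e.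 Φ_{λ(t)}(x(t)) − Φ* = o(1/(t²·b(t))). -/
open Set MeasureTheory Filter Real

noncomputable section

theorem prox_sub {H : Type*} [NormedAddCommGroup H] [InnerProductSpace ℝ H]
    (Φ : H → EReal) (hΦbot : ∀ y, Φ y ≠ ⊥) (hΦproper : ∃ y, Φ y ≠ ⊤)
    (hΦconv : EConvexOn Φ) (l : ℝ) (hl : 0 < l) (x p : H) (hp : IsProxPt Φ l x p) :
    Φ p ≠ ⊤ ∧ (∀ y, Φ y ≠ ⊤ →
      (Φ p).toReal + inner ℝ (l⁻¹ • (x - p)) (y - p) ≤ (Φ y).toReal) ∧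
      moreau Φ l x = (Φ p).toReal + ‖x - p‖ ^ 2 / (2 * l) := by
  have htop : Φ p ≠ ⊤ := by
    obtain ⟨y, hy⟩ := hΦproper
    intro h
    have h1 := hp y
    rw [h, EReal.top_add_coe, ← EReal.coe_toReal hy (hΦbot y), ← EReal.coe_add] at h1
    exact EReal.coe_ne_top _ (top_le_iff.1 h1)
  have hP := EReal.coe_toReal htop (hΦbot p)
  refine ⟨htop, ?_, ?_⟩
  · intro y hy
    have hY := EReal.coe_toReal hy (hΦbot y)
    generalize (Φ p).toReal = P at *
    generalize (Φ y).toReal = Y at *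
    have key : ∀ θ : ℝ, 0 < θ → θ ≤ 1 →
        P + inner ℝ (l⁻¹ • (x - p)) (y - p) ≤ Y + θ * (‖y - p‖ ^ 2 / (2 * l)) := by
      intro θ h0 h1
      have a1 := hp ((1 - θ) • p + θ • y)
      have a2 := hΦconv p y (1 - θ) θ (by linarith) h0.le (by ring)
      have a3 := a1.trans (add_le_add_left a2 _)
      rw [← hP, ← hY] at a3
      norm_cast at a3
      have e : x - ((1 - θ) • p + θ • y) = (x - p) - θ • (y - p) := by module
      rw [e, norm_sub_sq_real (x - p) (θ • (y - p)), norm_smul, inner_smul_right, Real.norm_eq_abs, abs_of_pos h0] at a3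
      rw [real_inner_smul_left]
      generalize inner ℝ (x - p) (y - p) = I at *
      have e2 : (‖x - p‖ ^ 2 - 2 * (θ * I) + (θ * ‖y - p‖) ^ 2) / (2 * l)
        = ‖x - p‖ ^ 2 / (2 * l) - θ * (l⁻¹ * I) + θ * (θ * (‖y - p‖ ^ 2 / (2 * l))) := by
        field_simp
      rw [e2] at a3
      have : θ * (P + l⁻¹ * I) ≤ θ * (Y + θ * (‖y - p‖ ^ 2 / (2 * l))) := by linarith
      exact le_of_mul_le_mul_left this h0
    have ht : Tendsto (fun θ : ℝ => Y + θ * (‖y - p‖ ^ 2 / (2 * l))) (nhdsWithin 0 (Ioi 0))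
        (nhds (Y + 0 * (‖y - p‖ ^ 2 / (2 * l)))) := by
      apply Tendsto.mono_left _ nhdsWithin_le_nhds
      apply Continuous.tendsto
      fun_prop
    rw [zero_mul, add_zero] at ht
    refine ge_of_tendsto ht ?_
    filter_upwards [Ioc_mem_nhdsGT (zero_lt_one' ℝ)] with θ hθ
    exact key θ hθ.1 hθ.2
  · unfold moreau
    have : (⨅ y : H, Φ y + ((‖x - y‖ ^ 2 / (2 * l) : ℝ) : EReal))
        = Φ p + ((‖x - p‖ ^ 2 / (2 * l) : ℝ) : EReal) :=
      le_antisymm (iInf_le _ p) (le_iInf hp)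
    rw [this]
    nth_rewrite 1 [← hP]
    rw [← EReal.coe_add, EReal.toReal_coe]

theorem inner_deriv_nonneg {H : Type*} [NormedAddCommGroup H] [InnerProductSpace ℝ H]
    (G p : ℝ → H) (g q : H) (t₀ t : ℝ) (ht : t₀ < t) (hG : HasDerivAt G g t)
    (hp : HasDerivAt p q t)
    (hm : ∀ s ≥ t₀, 0 ≤ inner ℝ (G s - G t) (p s - p t)) : 0 ≤ inner ℝ g q := by
  have h := (hasDerivAt_iff_tendsto_slope.1 hG).inner (𝕜 := ℝ) (hasDerivAt_iff_tendsto_slope.1 hp)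
  refine ge_of_tendsto h ?_
  filter_upwards [nhdsWithin_le_nhds (Ioi_mem_nhds ht)] with s hs
  simp only [slope_def_module, real_inner_smul_left, real_inner_smul_right]
  rw [← mul_assoc]
  exact mul_nonneg (mul_self_nonneg _) (hm s (le_of_lt hs))

theorem hasDeriv_val {H : Type*} [NormedAddCommGroup H] [InnerProductSpace ℝ H]
    (G p : ℝ → H) (f : ℝ → ℝ) (g q : H) (t₀ t : ℝ) (ht : t₀ < t) (hG : HasDerivAt G g t)
    (hp : HasDerivAt p q t)
    (hm : ∀ s ≥ t₀, ∀ r ≥ t₀, f r + inner ℝ (G r) (p s - p r) ≤ f s) :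
    HasDerivAt f (inner ℝ (G t) q) t := by
  rw [hasDerivAt_iff_tendsto_slope]
  have h1 := (tendsto_const_nhds (x := G t)).inner (𝕜 := ℝ) (hasDerivAt_iff_tendsto_slope.1 hp)
  have h2 := (hG.continuousAt.tendsto.mono_left (nhdsWithin_le_nhds (s := {t}ᶜ))).inner (𝕜 := ℝ)
    (hasDerivAt_iff_tendsto_slope.1 hp)
  -- squeeze on difference
  have h3 : Tendsto (fun s => slope f t s - inner ℝ (G t) (slope p t s)) (nhdsWithin t {t}ᶜ)
      (nhds 0) := by
    have h4 := (h2.sub h1).abs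
    simp only [sub_self, abs_zero] at h4
    refine squeeze_zero_norm' ?_ h4
    filter_upwards [nhdsWithin_le_nhds (Ioi_mem_nhds ht)] with s hs
    have a1 := hm s (le_of_lt hs) t ht.le
    have a2 := hm t ht.le s (le_of_lt hs)
    rw [← neg_sub (p s) (p t), inner_neg_right] at a2
    simp only [slope_def_module, real_inner_smul_right, smul_eq_mul, Real.norm_eq_abs]
    rw [← mul_sub, ← mul_sub, abs_mul, abs_mul]
    apply mul_le_mul_of_nonneg_left _ (abs_nonneg _)
    rw [abs_of_nonneg (by linarith)]
    exact le_trans (by linarith) (le_abs_self _)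
  have := h3.add h1
  simpa using this

theorem mono_alg {H : Type*} [NormedAddCommGroup H] [InnerProductSpace ℝ H]
    (D v G : H) (l m : ℝ) (hl : 0 < l) (hm : 0 ≤ m)
    (h : 0 ≤ inner ℝ D (v - m • G - l • D)) : -(m / l * (‖G‖ * ‖v‖)) ≤ inner ℝ D v := by
  set u := v - m • G with hu
  have h1 : l * ‖D‖ ^ 2 ≤ inner ℝ D u := by
    rw [inner_sub_right, real_inner_smul_right, real_inner_self_eq_norm_sq] at h
    linarith
  have h2 : ‖(2 * l) • D - u‖ ≤ ‖u‖ := by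
    apply le_of_sq_le_sq _ (norm_nonneg _)
    rw [norm_sub_sq_real, norm_smul, real_inner_smul_left, mul_pow, Real.norm_eq_abs, sq_abs]
    nlinarith
  have h3 := (abs_le.1 (abs_real_inner_le_norm ((2 * l) • D - u) v)).1
  rw [inner_sub_left, real_inner_smul_left] at h3
  have h4 : ‖u‖ ≤ ‖v‖ + m * ‖G‖ := by
    refine (norm_sub_le _ _).trans ?_
    rw [norm_smul, Real.norm_eq_abs, abs_of_nonneg hm]
  have h5 : inner ℝ u v = ‖v‖ ^ 2 - m * inner ℝ G v := by
    rw [hu, inner_sub_left, real_inner_smul_left, real_inner_self_eq_norm_sq]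
  have h6 := real_inner_le_norm G v
  have h7 : ‖(2 * l) • D - u‖ * ‖v‖ ≤ (‖v‖ + m * ‖G‖) * ‖v‖ :=
    mul_le_mul_of_nonneg_right (h2.trans h4) (norm_nonneg _)
  have h8 : m * inner ℝ G v ≤ m * (‖G‖ * ‖v‖) := mul_le_mul_of_nonneg_left h6 hm
  have h9 : -(m * (‖G‖ * ‖v‖)) ≤ l * inner ℝ D v := by nlinarith
  have : l * (-(m / l * (‖G‖ * ‖v‖))) ≤ l * inner ℝ D v := by
    have e : l * (-(m / l * (‖G‖ * ‖v‖))) = -(m * (‖G‖ * ‖v‖)) := by field_simp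
    rw [e]; exact h9
  exact le_of_mul_le_mul_left this hl

/-- final argument -/
theorem tendsto_of_bound (W g : ℝ → ℝ) (T : ℝ) (hT : 0 < T) (hW : ∀ t ≥ T, 0 ≤ W t)
    (hg : IntegrableOn g (Ioi T)) (hg0 : ∀ t ≥ T, 0 ≤ g t)
    (hWi : IntegrableOn (fun t => W t / t) (Ioi T))
    (hd : ∀ s ≥ T, ∀ t ≥ s, W t - W s ≤ ∫ r in s..t, g r) :
    Tendsto W atTop (nhds 0) := by
  rw [Metric.tendsto_atTop]
  intro η hη
  have hlim := intervalIntegral_tendsto_integral_Ioi T hg tendsto_id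
  have hev := (tendsto_order.1 hlim).1 ((∫ x in Ioi T, g x) - η / 2) (by linarith)
  obtain ⟨T1, hT1⟩ := eventually_atTop.1 (hev.and (eventually_ge_atTop T))
  have hT1' := (hT1 T1 le_rfl).2
  obtain ⟨s, hs, hWs⟩ : ∃ s ≥ T1, W s < η / 2 := by
    by_contra! hcon
    apply not_integrableOn_Ioi_inv (a := T1)
    have hi : IntegrableOn (fun t => (2 / η) * (W t / t)) (Ioi T1) :=
      (hWi.mono_set (Ioi_subset_Ioi hT1')).const_mul _
    refine Integrable.mono' hi (measurable_inv.aestronglyMeasurable) ?_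
    filter_upwards [ae_restrict_mem measurableSet_Ioi] with t ht
    have ht0 : 0 < t := by have := mem_Ioi.1 ht; linarith
    rw [Real.norm_eq_abs, abs_of_pos (by positivity)]
    have := hcon t (le_of_lt ht)
    rw [inv_eq_one_div, ← mul_div_assoc]
    apply div_le_div_of_nonneg_right _ ht0.le
    rw [div_mul_eq_mul_div, le_div_iff₀ hη]
    linarith
  refine ⟨s, fun t ht => ?_⟩
  have hst := hd s (by linarith) t ht
  have hTs : T ≤ s := by linarith
  have hI : ∀ a b : ℝ, T ≤ a → a ≤ b → IntervalIntegrable g volume a b := fun a b ha hab => by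
    rw [intervalIntegrable_iff_integrableOn_Ioc_of_le hab]
    exact hg.mono_set (fun r hr => lt_of_le_of_lt ha hr.1)
  have e1 := intervalIntegral.integral_add_adjacent_intervals (hI T s le_rfl hTs) (hI s t hTs ht)
  have e2 : (∫ x in Ioi T, g x) - η / 2 < ∫ r in T..s, g r := (hT1 s hs).1
  have e3 : ∫ r in T..t, g r ≤ ∫ x in Ioi T, g x := by
    rw [intervalIntegral.integral_of_le (by linarith)]
    apply setIntegral_mono_set hg
    · filter_upwards [ae_restrict_mem measurableSet_Ioi] with r hr using hg0 r (le_of_lt hr)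
    · exact Filter.Eventually.of_forall (fun r hr => hr.1)
  rw [Real.dist_eq, sub_zero, abs_of_nonneg (hW t (by linarith))]
  linarith

theorem energy_alg {H : Type*} [NormedAddCommGroup H] [InnerProductSpace ℝ H]
    (X v acc G G' : H) (t α β β' b w w' lam lam' h c ε : ℝ) (ht : 0 < t)
    (hβ : 0 ≤ β) (hw : w = b - β' - β / t) (hw0 : 0 < w)
    (hlam : 0 < lam) (hlam' : 0 ≤ lam') (hc0 : 0 < c) (hc : c = α - 1 - ε / 2) (hε : 0 < ε)
    (hode : acc + (α / t) • v + β • G' + b • G = 0) (h0 : 0 ≤ h)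
    (hAs : ε * b ≤ (α - 3) * w - t * w')
    (hsub : h + lam / 2 * ‖G‖ ^ 2 ≤ inner ℝ G X) :
    ((2 * t * w + t ^ 2 * w') + ε / 2 * (β + t * β')) * h
      + (t ^ 2 * w + ε / 2 * (t * β)) * (inner ℝ G v - lam' / 2 * ‖G‖ ^ 2)
      + inner ℝ (c • X + t • (v + β • G)) (c • v + (t • (acc + (β • G' + β' • G)) + (v + β • G)))
      + c * (ε / 2) * inner ℝ X v
      ≤ - (ε / 2) * (t * b * h + t * ‖v‖ ^ 2) := by
  have hb : β + t * β' = t * (b - w) := by rw [hw]; field_simp; ring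
  have e : c • v + (t • (acc + (β • G' + β' • G)) + (v + β • G))
      = (c + 1 - α) • v - (t * w) • G := by
    have ha : acc = - ((α / t) • v + β • G' + b • G) := by
      rw [← sub_eq_zero, ← hode]; module
    rw [ha]
    have h1 : t * (α / t) = α := by field_simp
    have h2 : t * w = t * b - (β + t * β') := by rw [hb]; ring
    rw [h2]
    have h3 : t • (-((α / t) • v + β • G' + b • G) + (β • G' + β' • G))
       = -((t * (α / t)) • v) - (t * b) • G + (t * β') • G := by module
    rw [h3, h1]; module
  rw [e]
  simp only [inner_sub_right, inner_add_left, real_inner_smul_left, real_inner_smul_right,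
    inner_add_right, real_inner_self_eq_norm_sq, hb]
  rw [real_inner_comm v G, real_inner_comm G X] at *
  have hca : α = c + 1 + ε / 2 := by rw [hc]; ring
  subst hca
  generalize inner ℝ G v = Gv at *
  generalize inner ℝ G X = GX at *
  generalize inner ℝ X v = Xv at *
  have k1 : c * t * w * (h + lam / 2 * ‖G‖ ^ 2) ≤ c * t * w * GX :=
    mul_le_mul_of_nonneg_left hsub (by positivity)
  have k2 : 0 ≤ c * t * w * (lam / 2 * ‖G‖ ^ 2) := by positivity
  have k3 : 0 ≤ (t ^ 2 * w + ε / 2 * (t * β)) * (lam' / 2 * ‖G‖ ^ 2) := by positivity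
  have k4 : 0 ≤ t ^ 2 * w * β * ‖G‖ ^ 2 := by positivity
  have k5 : t * h * (ε * b) ≤ t * h * ((c + 1 + ε / 2 - 3) * w - t * w') :=
    mul_le_mul_of_nonneg_left hAs (by positivity)
  nlinarith

theorem W_alg {H : Type*} [NormedAddCommGroup H] [InnerProductSpace ℝ H]
    (v acc G G' : H) (t α β b b' lam lam' h C M : ℝ) (ht : 0 < t) (hα : 1 < α)
    (hβ : 0 ≤ β) (hlam : 0 < lam) (hlam' : 0 ≤ lam')
    (hode : acc + (α / t) • v + β • G' + b • G = 0) (h0 : 0 ≤ h)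
    (hAs : 2 * t * b + t ^ 2 * b' ≤ C * (t * b))
    (hG : lam * ‖G‖ ≤ M) (hM : 0 ≤ M)
    (hGv : -(lam' / lam * (‖G‖ * ‖v‖)) ≤ inner ℝ G' v) :
    (2 * t * b + t ^ 2 * b') * h + t ^ 2 * b * (inner ℝ G v - lam' / 2 * ‖G‖ ^ 2)
      + (t * ‖v‖ ^ 2 + t ^ 2 * inner ℝ v acc)
    ≤ C * (t * b * h) + t * ‖v‖ ^ 2
      + M ^ 2 * max (lam' ^ 2 * t ^ 3 * β ^ 2 / lam ^ 4 - lam' * t ^ 2 * b / (2 * lam ^ 2)) 0 := by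
  have ha : acc = - ((α / t) • v + β • G' + b • G) := by
    rw [← sub_eq_zero, ← hode]; module
  have h1 : t ^ 2 * (α / t) = t * α := by field_simp
  rw [ha]
  simp only [inner_neg_right, inner_add_right, real_inner_smul_right, real_inner_self_eq_norm_sq]
  rw [real_inner_comm G' v, real_inner_comm G v]
  set Q := lam' ^ 2 * t ^ 3 * β ^ 2 / lam ^ 4 - lam' * t ^ 2 * b / (2 * lam ^ 2) with hQ
  have k1 : (2 * t * b + t ^ 2 * b') * h ≤ C * (t * b) * h := mul_le_mul_of_nonneg_right hAs h0
  have k2 : t ^ 2 * β * (-(lam' / lam * (‖G‖ * ‖v‖))) ≤ t ^ 2 * β * inner ℝ G' v :=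
    mul_le_mul_of_nonneg_left hGv (by positivity)
  have k3 : t ^ 2 * β * (lam' / lam * (‖G‖ * ‖v‖))
      ≤ t ^ 3 * β ^ 2 * (lam' / lam) ^ 2 * ‖G‖ ^ 2 + t * ‖v‖ ^ 2 / 4 := by
    have : 0 ≤ t * (t * β * (lam' / lam) * ‖G‖ - ‖v‖ / 2) ^ 2 := by positivity
    nlinarith
  have k4 : (lam * ‖G‖) ^ 2 * Q ≤ M ^ 2 * max Q 0 := by
    have a1 : (lam * ‖G‖) ^ 2 ≤ M ^ 2 := pow_le_pow_left₀ (by positivity) hG 2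
    calc (lam * ‖G‖) ^ 2 * Q ≤ (lam * ‖G‖) ^ 2 * max Q 0 :=
          mul_le_mul_of_nonneg_left (le_max_left _ _) (by positivity)
      _ ≤ _ := mul_le_mul_of_nonneg_right a1 (le_max_right _ _)
  have k5 : (lam * ‖G‖) ^ 2 * Q = t ^ 3 * β ^ 2 * (lam' / lam) ^ 2 * ‖G‖ ^ 2
      - t ^ 2 * b * (lam' / 2 * ‖G‖ ^ 2) := by
    rw [hQ]; field_simp
  have k6 : 0 ≤ (α - 1) * (t * ‖v‖ ^ 2) := mul_nonneg (by linarith) (by positivity)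
  have k7 : 0 ≤ t * ‖v‖ ^ 2 := by positivity
  have k8 : t ^ 2 * (α / t * ‖v‖ ^ 2) = t * α * ‖v‖ ^ 2 := by rw [← h1]; ring
  nlinarith

theorem core {H : Type*} [NormedAddCommGroup H] [InnerProductSpace ℝ H]
    (t₀ α : ℝ) (ht₀ : 0 < t₀)
    (β b lam β' b' lam' w w' h : ℝ → ℝ)
    (hβnonneg : ∀ t ≥ t₀, 0 ≤ β t)
    (hbpos : ∀ t ≥ t₀, 0 < b t)
    (hlampos : ∀ t ≥ t₀, 0 < lam t)
    (hlam'0 : ∀ t ≥ t₀, 0 ≤ lam' t)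
    (hβ' : ∀ t ≥ t₀, HasDerivAt β (β' t) t)
    (hb' : ∀ t ≥ t₀, HasDerivAt b (b' t) t)
    (hlam' : ∀ t ≥ t₀, HasDerivAt lam (lam' t) t)
    (hweq : ∀ t, w t = b t - β' t - β t / t)
    (hw' : ∀ t ≥ t₀, HasDerivAt w (w' t) t)
    (x v acc G G' : ℝ → H) (z : H)
    (hx : ∀ t ≥ t₀, HasDerivAt x (v t) t)
    (hv : ∀ t ≥ t₀, HasDerivAt v (acc t) t)
    (hG' : ∀ t ≥ t₀, HasDerivAt G (G' t) t)
    (hode : ∀ t ≥ t₀, acc t + (α / t) • v t + β t • G' t + b t • G t = 0)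
    (hα : 1 < α)
    (hw : ∀ t ≥ t₀, 0 < w t)
    (hh0 : ∀ t ≥ t₀, 0 ≤ h t)
    (hh : ∀ t ≥ t₀, HasDerivAt h (inner ℝ (G t) (v t) - lam' t / 2 * ‖G t‖ ^ 2) t)
    (hsub : ∀ t ≥ t₀, h t + lam t / 2 * ‖G t‖ ^ 2 ≤ inner ℝ (G t) (x t - z))
    (hGb : ∀ t ≥ t₀, lam t * ‖G t‖ ≤ ‖x t - z‖)
    (hGv : ∀ t ≥ t₀, -(lam' t / lam t * (‖G t‖ * ‖v t‖)) ≤ inner ℝ (G' t) (v t))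
    (ε : ℝ) (hε : 0 < ε) (hεα : ε < α - 1)
    (hAs2 : ∀ t ≥ t₀, ε * b t ≤ (α - 3) * w t - t * w' t)
    (hAs4 : ∫⁻ t in Set.Ici t₀, ENNReal.ofReal ((lam' t) ^ 2 * t ^ 3 * (β t) ^ 2 / (lam t) ^ 4
      - lam' t * t ^ 2 * b t / (2 * (lam t) ^ 2)) < ⊤)
    (C : ℝ) (hC : 0 < C) (hAs : ∀ t ≥ t₀, 2 * t * b t + t ^ 2 * b' t ≤ C * (t * b t)) :
    Tendsto (fun t => t ^ 2 * b t * h t) atTop (nhds 0) := by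
  have htpos : ∀ t ≥ t₀, 0 < t := fun t ht => lt_of_lt_of_le ht₀ ht
  obtain ⟨c, hc⟩ : ∃ c, c = α - 1 - ε / 2 := ⟨_, rfl⟩
  have hc0 : 0 < c := by linarith
  let F : ℝ → ℝ := fun t => t * b t * h t + t * ‖v t‖ ^ 2
  let E : ℝ → ℝ := fun t => (t ^ 2 * w t + ε / 2 * (t * β t)) * h t
    + (1 / 2) * ‖c • (x t - z) + t • (v t + β t • G t)‖ ^ 2
    + c * (ε / 2) / 2 * ‖x t - z‖ ^ 2
  have hF0 : ∀ t ≥ t₀, 0 ≤ F t := fun t ht => by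
    have := htpos t ht; have := hbpos t ht; have := hh0 t ht
    simp only [F]; positivity
  have hE0 : ∀ t ≥ t₀, c * (ε / 2) / 2 * ‖x t - z‖ ^ 2 ≤ E t := fun t ht => by
    have := htpos t ht; have := hw t ht; have := hh0 t ht; have := hβnonneg t ht
    have : 0 ≤ (t ^ 2 * w t + ε / 2 * (t * β t)) * h t
      + (1 / 2) * ‖c • (x t - z) + t • (v t + β t • G t)‖ ^ 2 := by positivity
    simp only [E]; linarith
  have cb : ContinuousOn b (Ici t₀) := fun t ht => (hb' t ht).continuousAt.continuousWithinAt
  have cβ : ContinuousOn β (Ici t₀) := fun t ht => (hβ' t ht).continuousAt.continuousWithinAt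
  have cl : ContinuousOn lam (Ici t₀) := fun t ht => (hlam' t ht).continuousAt.continuousWithinAt
  have ch : ContinuousOn h (Ici t₀) := fun t ht => (hh t ht).continuousAt.continuousWithinAt
  have cv : ContinuousOn v (Ici t₀) := fun t ht => (hv t ht).continuousAt.continuousWithinAt
  have cF1 : ContinuousOn (fun t => t * b t * h t) (Ici t₀) := by fun_prop
  have cF2 : ContinuousOn (fun t => t * ‖v t‖ ^ 2) (Ici t₀) := by fun_prop
  have cF : ContinuousOn F (Ici t₀) := cF1.add cF2
  have hEd : ∀ t ≥ t₀, ∃ e, HasDerivAt E e t ∧ e ≤ - (ε / 2) * F t := fun t ht => by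
    refine ⟨_, ?_, energy_alg (x t - z) (v t) (acc t) (G t) (G' t) t α (β t) (β' t) (b t) (w t)
      (w' t) (lam t) (lam' t) (h t) c ε (htpos t ht) (hβnonneg t ht) (hweq t) (hw t ht)
      (hlampos t ht) (hlam'0 t ht) hc0 hc hε (hode t ht) (hh0 t ht) (hAs2 t ht) (hsub t ht)⟩
    have d1 : HasDerivAt (fun s => s ^ 2 * w s + ε / 2 * (s * β s))
        ((2 * t * w t + t ^ 2 * w' t) + ε / 2 * (β t + t * β' t)) t := by
      have := ((hasDerivAt_pow 2 t).mul (hw' t ht)).add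
        (((hasDerivAt_id t).mul (hβ' t ht)).const_mul (ε / 2))
      refine HasDerivAt.congr_deriv this ?_
      simp
    have d2 := d1.mul (hh t ht)
    have dX : HasDerivAt (fun s => x s - z) (v t) t := (hx t ht).sub_const z
    have d3 := ((dX.const_smul c).add ((hasDerivAt_id t).smul
      ((hv t ht).add ((hβ' t ht).smul (hG' t ht))))).norm_sq.const_mul (1 / 2 : ℝ)
    have d4 := dX.norm_sq.const_mul (c * (ε / 2) / 2)
    refine HasDerivAt.congr_deriv ((d2.add d3).add d4) ?_
    simp only [id, one_smul, Pi.add_apply, Pi.smul_apply, Pi.smul_apply']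
    ring
  choose! E' hE' hE'le using hEd
  have hEint : ∀ t ≥ t₀, E t - E t₀ ≤ ∫ s in t₀..t, -(ε / 2) * F s := fun t ht => by
    apply intervalIntegral.sub_le_integral_of_hasDeriv_right_of_le ht (g' := E')
    · exact fun s hs => (hE' s hs.1).continuousAt.continuousWithinAt
    · exact fun s hs => (hE' s hs.1.le).hasDerivWithinAt
    · exact ((continuousOn_const.mul cF).mono Icc_subset_Ici_self).integrableOn_Icc
    · exact fun s hs => hE'le s hs.1.le
  have hFi0 : ∀ t ≥ t₀, 0 ≤ ∫ s in t₀..t, F s := fun t ht =>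
    intervalIntegral.integral_nonneg ht (fun s hs => hF0 s hs.1)
  have hEle : ∀ t ≥ t₀, E t + (ε / 2) * ∫ s in t₀..t, F s ≤ E t₀ := fun t ht => by
    have := hEint t ht
    rw [intervalIntegral.integral_const_mul] at this
    linarith
  have hFint : IntegrableOn F (Ioi t₀) := by
    refine integrableOn_Ioi_of_intervalIntegral_norm_bounded (2 / ε * E t₀) t₀ (b := id)
      (l := atTop) ?_ tendsto_id ?_
    · intro i
      exact ((cF.mono Icc_subset_Ici_self).integrableOn_Icc).mono_set Ioc_subset_Icc_self
    · filter_upwards [eventually_ge_atTop t₀] with t ht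
      have e : ∫ s in t₀..id t, ‖F s‖ = ∫ s in t₀..t, F s := by
        apply intervalIntegral.integral_congr
        intro s hs
        rw [id, uIcc_of_le ht] at hs
        exact (Real.norm_of_nonneg (hF0 s hs.1))
      rw [e]
      have a1 := hEle t ht
      have a2 : 0 ≤ E t := le_trans (by positivity) (hE0 t ht)
      rw [div_mul_eq_mul_div, le_div_iff₀ hε]
      nlinarith
  obtain ⟨M, hM0, hM⟩ : ∃ M, 0 ≤ M ∧ ∀ t ≥ t₀, ‖x t - z‖ ≤ M := by
    refine ⟨Real.sqrt (E t₀ / (c * (ε / 2) / 2)), Real.sqrt_nonneg _, fun t ht => ?_⟩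
    apply Real.le_sqrt_of_sq_le
    rw [le_div_iff₀ (by positivity)]
    have a1 := hEle t ht
    have a2 := hE0 t ht
    have a3 : 0 ≤ (ε / 2) * ∫ s in t₀..t, F s := mul_nonneg (by positivity) (hFi0 t ht)
    linarith
  let q : ℝ → ℝ := fun t => (lam' t) ^ 2 * t ^ 3 * (β t) ^ 2 / (lam t) ^ 4
      - lam' t * t ^ 2 * b t / (2 * (lam t) ^ 2)
  have hqm : AEMeasurable q (volume.restrict (Ici t₀)) := by
    have ml : AEMeasurable lam' (volume.restrict (Ici t₀)) := by
      refine (measurable_deriv lam).aemeasurable.congr ?_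
      filter_upwards [ae_restrict_mem measurableSet_Ici] with t ht using (hlam' t ht).deriv
    have mb := cb.aemeasurable (μ := volume) measurableSet_Ici
    have mβ := cβ.aemeasurable (μ := volume) measurableSet_Ici
    have mlam := cl.aemeasurable (μ := volume) measurableSet_Ici
    simp only [q]
    fun_prop
  have hqi : IntegrableOn (fun t => max (q t) 0) (Ioi t₀) := by
    have : IntegrableOn (fun t => max (q t) 0) (Ici t₀) := by
      refine ⟨(hqm.max aemeasurable_const).aestronglyMeasurable, ?_⟩
      rw [hasFiniteIntegral_iff_ofReal (f := fun t => max (q t) 0)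
        (Eventually.of_forall (fun t => le_max_right _ _))]
      have e : ∀ t, ENNReal.ofReal (max (q t) 0) = ENNReal.ofReal (q t) := fun t => by
        rw [ENNReal.ofReal_max]; simp
      simp only [e]
      exact hAs4
    exact this.mono_set Ioi_subset_Ici_self
  have hF1 : IntegrableOn (fun t => t * b t * h t) (Ioi t₀) := by
    refine Integrable.mono' hFint
      ((cF1.mono Ioi_subset_Ici_self).aestronglyMeasurable measurableSet_Ioi) ?_
    filter_upwards [ae_restrict_mem measurableSet_Ioi] with t ht
    have h1 := le_of_lt (mem_Ioi.1 ht)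
    have := htpos t h1; have := hbpos t h1; have := hh0 t h1
    rw [Real.norm_of_nonneg (by positivity)]
    simp only [F]; linarith [show 0 ≤ t * ‖v t‖ ^ 2 by positivity]
  have hF2 : IntegrableOn (fun t => t * ‖v t‖ ^ 2) (Ioi t₀) := by
    refine (hFint.sub hF1).congr (Eventually.of_forall fun t => ?_)
    simp [F]
  let W : ℝ → ℝ := fun t => t ^ 2 * b t * h t + t ^ 2 * ‖v t‖ ^ 2 / 2
  let g : ℝ → ℝ := fun t => C * (t * b t * h t) + t * ‖v t‖ ^ 2 + M ^ 2 * max (q t) 0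
  have hg : IntegrableOn g (Ioi t₀) := ((hF1.const_mul C).add hF2).add (hqi.const_mul (M ^ 2))
  have hWd : ∀ t ≥ t₀, ∃ e, HasDerivAt W e t ∧ e ≤ g t := fun t ht => by
    refine ⟨_, ?_, W_alg (v t) (acc t) (G t) (G' t) t α (β t) (b t) (b' t) (lam t) (lam' t) (h t)
      C M (htpos t ht) hα (hβnonneg t ht) (hlampos t ht) (hlam'0 t ht) (hode t ht) (hh0 t ht)
      (hAs t ht) ((hGb t ht).trans (hM t ht)) hM0 (hGv t ht)⟩
    have d1 := ((hasDerivAt_pow 2 t).mul (hb' t ht)).mul (hh t ht)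
    have d2 := ((hasDerivAt_pow 2 t).mul (hv t ht).norm_sq).div_const 2
    refine HasDerivAt.congr_deriv (d1.add d2) ?_
    simp only [Pi.mul_apply]
    norm_num
    ring
  choose! W' hW' hW'le using hWd
  have hW0 : ∀ t ≥ t₀, 0 ≤ W t := fun t ht => by
    have := htpos t ht; have := hbpos t ht; have := hh0 t ht
    simp only [W]; positivity
  have hWlim : Tendsto W atTop (nhds 0) := by
    refine tendsto_of_bound W g t₀ ht₀ hW0 hg ?_ ?_ ?_
    · intro t ht
      have := htpos t ht; have := hbpos t ht; have := hh0 t ht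
      have := le_max_right (q t) 0
      simp only [g]; positivity
    · refine (hF1.add (hF2.const_mul (1 / 2))).congr ?_
      filter_upwards [ae_restrict_mem measurableSet_Ioi] with t ht
      have := htpos t (le_of_lt ht)
      simp only [W, Pi.add_apply]
      field_simp
    · intro s hs t hst
      apply intervalIntegral.sub_le_integral_of_hasDeriv_right_of_le hst (g' := W')
      · exact fun r hr => (hW' r (hs.le.trans hr.1)).continuousAt.continuousWithinAt
      · exact fun r hr => (hW' r (hs.le.trans hr.1.le)).hasDerivWithinAt
      · rw [integrableOn_Icc_iff_integrableOn_Ioc]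
        exact hg.mono_set (fun r hr => lt_of_le_of_lt hs hr.1)
      · exact fun r hr => hW'le r (hs.le.trans hr.1.le)
  refine squeeze_zero' ?_ ?_ hWlim
  · filter_upwards [eventually_ge_atTop t₀] with t ht
    have := htpos t ht; have := hbpos t ht; have := hh0 t ht
    positivity
  · filter_upwards with t
    simp only [W]
    linarith [show 0 ≤ t ^ 2 * ‖v t‖ ^ 2 / 2 by positivity]

theorem moreau_values_little_o
    {H : Type*} [NormedAddCommGroup H] [InnerProductSpace ℝ H] [CompleteSpace H]
    (Φ : H → EReal)
    (hΦbot : ∀ y, Φ y ≠ ⊥) (hΦproper : ∃ y, Φ y ≠ ⊤)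
    (hΦconv : EConvexOn Φ) (hΦlsc : LowerSemicontinuous Φ)
    (t₀ α : ℝ) (ht₀ : 0 < t₀)
    (β b lam β' b' lam' w' : ℝ → ℝ)
    (hβnonneg : ∀ t ≥ t₀, 0 ≤ β t)
    (hbpos : ∀ t ≥ t₀, 0 < b t)
    (hlampos : ∀ t ≥ t₀, 0 < lam t)
    (hβ' : ∀ t ≥ t₀, HasDerivAt β (β' t) t)
    (hb' : ∀ t ≥ t₀, HasDerivAt b (b' t) t)
    (hlam' : ∀ t ≥ t₀, HasDerivAt lam (lam' t) t)
    (hw' : ∀ t ≥ t₀, HasDerivAt (fun s => b s - β' s - β s / s) (w' t) t)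
    (x v acc p G' : ℝ → H)
    (hx : ∀ t ≥ t₀, HasDerivAt x (v t) t)
    (hv : ∀ t ≥ t₀, HasDerivAt v (acc t) t)
    (hp : ∀ t ≥ t₀, IsProxPt Φ (lam t) (x t) (p t))
    (hG' : ∀ t ≥ t₀, HasDerivAt (fun s => (lam s)⁻¹ • (x s - p s)) (G' t) t)
    (hode : ∀ t ≥ t₀, acc t + (α / t) • v t + β t • G' t
        + b t • ((lam t)⁻¹ • (x t - p t)) = 0)
    (hα : 1 < α)
    (hlammono : MonotoneOn lam (Set.Ici t₀))
    (hβmono : MonotoneOn β (Set.Ici t₀))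
    (hw : ∀ t ≥ t₀, β' t + β t / t < b t)
    (hAs2 : ∃ ε, 0 < ε ∧ ε < α - 1 ∧
      ∀ t ≥ t₀, ε * b t ≤ (α - 3) * (b t - β' t - β t / t) - t * w' t)
    (hAs4 : ∫⁻ t in Set.Ici t₀, ENNReal.ofReal ((lam' t) ^ 2 * t ^ 3 * (β t) ^ 2 / (lam t) ^ 4
      - lam' t * t ^ 2 * b t / (2 * (lam t) ^ 2)) < ⊤)
    (hAs : ∃ C > (0 : ℝ), ∀ t ≥ t₀, 2 * t * b t + t ^ 2 * b' t ≤ C * (t * b t))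
    (z : H) (hz : ∀ y, Φ z ≤ Φ y)
    :
    Filter.Tendsto (fun t => t ^ 2 * b t * (moreau Φ (lam t) (x t) - (Φ z).toReal))
      Filter.atTop (nhds 0) := by

  obtain ⟨ε, hε, hεα, hAs2⟩ := hAs2
  obtain ⟨C, hC, hAs⟩ := hAs
  have hztop : Φ z ≠ ⊤ := by
    obtain ⟨y, hy⟩ := hΦproper
    exact fun hcon => hy (top_le_iff.1 (hcon ▸ hz y))
  have P := fun t (ht : t ≥ t₀) => prox_sub Φ hΦbot hΦproper hΦconv (lam t) (hlampos t ht) (x t)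
    (p t) (hp t ht)
  obtain ⟨G, hGdef⟩ : ∃ G : ℝ → H, G = fun s => (lam s)⁻¹ • (x s - p s) := ⟨_, rfl⟩
  have hGt : ∀ t, (lam t)⁻¹ • (x t - p t) = G t := fun t => by rw [hGdef]
  rw [← hGdef] at hG'
  simp only [hGt] at hode P
  obtain ⟨f, hf⟩ : ∃ f : ℝ → ℝ, f = fun t => (Φ (p t)).toReal := ⟨_, rfl⟩
  have hft : ∀ t, (Φ (p t)).toReal = f t := fun t => by rw [hf]
  have K1 : ∀ s ≥ t₀, ∀ r ≥ t₀, f r + inner ℝ (G r) (p s - p r) ≤ f s := fun s hs r hr => by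
    have := (P r hr).2.1 (p s) (P s hs).1
    simpa only [hft] using this
  have K2 : ∀ t ≥ t₀, f t + inner ℝ (G t) (z - p t) ≤ (Φ z).toReal := fun t ht => by
    have := (P t ht).2.1 z hztop
    simpa only [hft] using this
  have K3 : ∀ t ≥ t₀, (Φ z).toReal ≤ f t := fun t ht => by
    rw [← hft]; exact EReal.toReal_le_toReal (hz _) (hΦbot z) (P t ht).1
  have hxp : ∀ t ≥ t₀, x t - p t = lam t • G t := fun t ht => by
    rw [← hGt, smul_smul, mul_inv_cancel₀ (hlampos t ht).ne', one_smul]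
  have hpe : ∀ t ≥ t₀, p t = x t - lam t • G t := fun t ht => by
    rw [← hxp t ht]; abel
  have hmor : ∀ t ≥ t₀, moreau Φ (lam t) (x t) = f t + lam t / 2 * ‖G t‖ ^ 2 := fun t ht => by
    rw [(P t ht).2.2, hft, hxp t ht, norm_smul, Real.norm_of_nonneg (hlampos t ht).le]
    have := hlampos t ht
    field_simp
  have hpd : ∀ t > t₀, HasDerivAt p (v t - lam' t • G t - lam t • G' t) t := fun t ht => by
    have d := (hx t ht.le).sub ((hlam' t ht.le).smul (hG' t ht.le))
    have d2 := d.congr_of_eventuallyEq (f₁ := p) (by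
      filter_upwards [Ioi_mem_nhds ht] with s hs using hpe s (le_of_lt hs))
    convert d2 using 1
    abel
  have hl0 : ∀ t > t₀, 0 ≤ lam' t := fun t ht => by
    rw [← (hlam' t ht.le).deriv]
    have := hlammono.derivWithin_nonneg (x := t)
    rwa [derivWithin_of_mem_nhds (Ici_mem_nhds ht)] at this
  have hfd : ∀ t > t₀, HasDerivAt f (inner ℝ (G t) (v t - lam' t • G t - lam t • G' t)) t :=
    fun t ht => hasDeriv_val G p f _ _ t₀ t ht (hG' t ht.le) (hpd t ht) K1
  have hGp : ∀ t > t₀, 0 ≤ inner ℝ (G' t) (v t - lam' t • G t - lam t • G' t) := fun t ht => by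
    refine inner_deriv_nonneg G p _ _ t₀ t ht (hG' t ht.le) (hpd t ht) fun s hs => ?_
    have a1 := K1 s hs t ht.le
    have a2 := K1 t ht.le s hs
    rw [← neg_sub (p s) (p t), inner_neg_right] at a2
    rw [inner_sub_left]; linarith
  have hlt : ∀ t, t ≥ t₀ + 1 → t > t₀ := fun t ht => by linarith
  have hle : ∀ t, t ≥ t₀ + 1 → t ≥ t₀ := fun t ht => by linarith
  have hsub : ∀ t ≥ t₀, f t - (Φ z).toReal + lam t * ‖G t‖ ^ 2 ≤ inner ℝ (G t) (x t - z) := by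
    intro t ht
    have a := K2 t ht
    have e : z - p t = -(x t - z) + lam t • G t := by rw [← hxp t ht]; abel
    rw [e, inner_add_right, inner_neg_right, real_inner_smul_right,
      real_inner_self_eq_norm_sq] at a
    linarith
  have main := core (t₀ + 1) α (by linarith) β b lam β' b' lam'
    (fun s => b s - β' s - β s / s) w' (fun t => f t + lam t / 2 * ‖G t‖ ^ 2 - (Φ z).toReal)
    (fun t ht => hβnonneg t (hle t ht)) (fun t ht => hbpos t (hle t ht))
    (fun t ht => hlampos t (hle t ht)) (fun t ht => hl0 t (hlt t ht))
    (fun t ht => hβ' t (hle t ht)) (fun t ht => hb' t (hle t ht))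
    (fun t ht => hlam' t (hle t ht)) (fun t => rfl) (fun t ht => hw' t (hle t ht))
    x v acc G G' z (fun t ht => hx t (hle t ht)) (fun t ht => hv t (hle t ht))
    (fun t ht => hG' t (hle t ht)) (fun t ht => hode t (hle t ht)) hα
    (fun t ht => by have := hw t (hle t ht); linarith)
    (fun t ht => by
      have := K3 t (hle t ht); have := hlampos t (hle t ht)
      have : 0 ≤ lam t / 2 * ‖G t‖ ^ 2 := by positivity
      linarith)
    (fun t ht => by
      have d := ((hfd t (hlt t ht)).add (((hlam' t (hle t ht)).div_const 2).mul
        (hG' t (hle t ht)).norm_sq)).sub_const (Φ z).toReal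
      refine HasDerivAt.congr_deriv d ?_
      simp only [inner_sub_right, real_inner_smul_right, real_inner_self_eq_norm_sq]
      ring)
    (fun t ht => by have := hsub t (hle t ht); linarith)
    (fun t ht => by
      have a1 := hsub t (hle t ht); have a2 := K3 t (hle t ht)
      have a3 := real_inner_le_norm (G t) (x t - z)
      have a4 : ‖G t‖ * (lam t * ‖G t‖) ≤ ‖G t‖ * ‖x t - z‖ := by nlinarith
      rcases (norm_nonneg (G t)).eq_or_lt with h0 | h0
      · rw [← h0, mul_zero]; exact norm_nonneg _
      · exact le_of_mul_le_mul_left a4 h0)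
    (fun t ht => mono_alg (G' t) (v t) (G t) (lam t) (lam' t) (hlampos t (hle t ht))
      (hl0 t (hlt t ht)) (hGp t (hlt t ht)))
    ε hε hεα (fun t ht => hAs2 t (hle t ht))
    (lt_of_le_of_lt (lintegral_mono_set (Ici_subset_Ici.2 (by linarith))) hAs4)
    C hC (fun t ht => hAs t (hle t ht))
  refine main.congr' ?_
  filter_upwards [eventually_ge_atTop t₀] with t ht
  rw [hmor t ht]
end
end
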